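/- arXiv:1310.4618 — 3 statements merged into one kernel-verified Lean document; each statement's English description precedes it below -/
import Mathlib

section
/- If R ∈ S²_B(⋀²ℝ⁴) is an algebraic curvature operator on ⋀²ℝ⁴ satisfying Q(R) = R² + R # R = 0, then R is the zero operator. -/
open scoped BigOperators
open Matrix Filter

noncomputable section

/-- `so n`: the Lie algebra of real skew-symmetric `n × n` matrices, as a submodule of
matrices.  It is the model for `⋀²ℝⁿ` under the identification `x ∧ y ↦ x yᵀ - y xᵀ`,
i.e. `(x ∧ y)(z) = ⟨y,z⟩x - ⟨x,z⟩y`. -/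
def so (n : ℕ) : Submodule ℝ (Matrix (Fin n) (Fin n) ℝ) where
  carrier := {A | Aᵀ = -A}
  add_mem' := fun {a b} ha hb => by
    simp only [Set.mem_setOf_eq] at *
    rw [Matrix.transpose_add, ha, hb, neg_add]
  zero_mem' := by simp
  smul_mem' := fun c {a} ha => by
    simp only [Set.mem_setOf_eq] at *
    rw [Matrix.transpose_smul, ha, smul_neg]

lemma mem_so {n : ℕ} {A : Matrix (Fin n) (Fin n) ℝ} : A ∈ so n ↔ Aᵀ = -A := Iff.rfl

lemma so_skew {n : ℕ} (X : so n) : (X.1)ᵀ = -X.1 := mem_so.mp X.2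

lemma so_skew' {n : ℕ} (X : so n) (i j : Fin n) : X.1 j i = -X.1 i j := by
  have h := congrFun (congrFun (so_skew X) i) j
  simpa [Matrix.transpose_apply] using h

/-- The Lie bracket (matrix commutator) on `so n`. -/
def brkt {n : ℕ} (X Y : so n) : so n :=
  ⟨X.1 * Y.1 - Y.1 * X.1, by
    rw [mem_so, Matrix.transpose_sub, Matrix.transpose_mul, Matrix.transpose_mul,
      so_skew X, so_skew Y]
    simp [neg_sub]⟩

/-- The inner product `⟨A, B⟩ = -(1/2) tr (A B)` on `so n ≅ ⋀²ℝⁿ`, for which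
`{e_i ∧ e_j : i < j}` is orthonormal. -/
def ip {n : ℕ} (X Y : so n) : ℝ := -(1 / 2) * (X.1 * Y.1).trace

/-- `ip X` as a linear functional. -/
def ipL {n : ℕ} (X : so n) : so n →ₗ[ℝ] ℝ where
  toFun Y := ip X Y
  map_add' Y Z := by
    simp [ip, Matrix.mul_add, Matrix.trace_add]
    ring
  map_smul' c Y := by
    simp [ip, Matrix.mul_smul, Matrix.trace_smul]
    ring

/-- The wedge `x ∧ y` of two vectors, as an element of `so n`. -/
def wedgeVec {n : ℕ} (x y : Fin n → ℝ) : so n :=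
  ⟨Matrix.of fun i j => x i * y j - y i * x j, by
    rw [mem_so]
    ext i j
    simp [Matrix.transpose_apply]
    ring⟩

/-- Index set for the standard orthonormal basis `{e_i ∧ e_j : i < j}` of `so n`. -/
def pairs (n : ℕ) : Finset (Fin n × Fin n) := Finset.univ.filter (fun p => p.1 < p.2)

/-- Standard basis vector of `ℝⁿ`. -/
def stdVec {n : ℕ} (i : Fin n) : Fin n → ℝ := Pi.single i 1

/-- The standard orthonormal basis element `e_i ∧ e_j` of `so n`. -/
def omegaB {n : ℕ} (p : Fin n × Fin n) : so n := wedgeVec (stdVec p.1) (stdVec p.2)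

/-- Hamilton's sharp product `A # B` of self-adjoint endomorphisms of `⋀²ℝⁿ ≅ so n`:
`⟨(A # B)(φ), ψ⟩ = (1/2) Σ_{α,β} ⟨[A ω_α, B ω_β], φ⟩ ⟨[ω_α, ω_β], ψ⟩`
over the orthonormal basis `{ω_α} = {e_i ∧ e_j : i < j}`. -/
def sharp {n : ℕ} (A B : Module.End ℝ (so n)) : Module.End ℝ (so n) :=
  (1 / 2 : ℝ) • ∑ p ∈ pairs n, ∑ q ∈ pairs n,
    (ipL (brkt (A (omegaB p)) (B (omegaB q)))).smulRight (brkt (omegaB p) (omegaB q))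

/-- The bilinear map `Q(A,B) = (1/2)(AB + BA) + A # B`. -/
def Qbil {n : ℕ} (A B : Module.End ℝ (so n)) : Module.End ℝ (so n) :=
  (1 / 2 : ℝ) • (A * B + B * A) + sharp A B

/-- `Q(R) = R² + R # R`. -/
def Qop {n : ℕ} (R : Module.End ℝ (so n)) : Module.End ℝ (so n) := R * R + sharp R R

/-- Self-adjointness of an endomorphism of `so n ≅ ⋀²ℝⁿ`. -/
def IsSelfAdjointCO {n : ℕ} (R : Module.End ℝ (so n)) : Prop :=
  ∀ X Y : so n, ip (R X) Y = ip X (R Y)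

/-- The first Bianchi identity. -/
def SatBianchi {n : ℕ} (R : Module.End ℝ (so n)) : Prop :=
  ∀ x y z w : Fin n → ℝ,
    ip (R (wedgeVec x y)) (wedgeVec z w) + ip (R (wedgeVec y z)) (wedgeVec x w)
      + ip (R (wedgeVec z x)) (wedgeVec y w) = 0

/-- Algebraic curvature operators: self-adjoint endomorphisms of `⋀²ℝⁿ` satisfying the
first Bianchi identity.  `IsACO R` says `R ∈ S²_B(⋀²ℝⁿ)`. -/
def IsACO {n : ℕ} (R : Module.End ℝ (so n)) : Prop := IsSelfAdjointCO R ∧ SatBianchi R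

/-- The Ricci tensor of `R`, `Ric(R)_{ij} = Σ_k ⟨R(e_i ∧ e_k), e_j ∧ e_k⟩`. -/
def RicM {n : ℕ} (R : Module.End ℝ (so n)) : Matrix (Fin n) (Fin n) ℝ :=
  Matrix.of fun i j => ∑ k, ip (R (wedgeVec (stdVec i) (stdVec k))) (wedgeVec (stdVec j) (stdVec k))

/-- The scalar curvature `s(R) = tr Ric(R)`. -/
def scal {n : ℕ} (R : Module.End ℝ (so n)) : ℝ := (RicM R).trace

/-- `‖Ric(R)‖² = tr (Ric(R)²)`. -/
def ricNormSq {n : ℕ} (R : Module.End ℝ (so n)) : ℝ := (RicM R * RicM R).trace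

/-- The traceless Ricci tensor `Ric₀(R)`. -/
def Ric0M {n : ℕ} (R : Module.End ℝ (so n)) : Matrix (Fin n) (Fin n) ℝ :=
  RicM R - (scal R / n) • (1 : Matrix (Fin n) (Fin n) ℝ)

/-- `R` is Einstein if `Ric(R)` is a scalar multiple of the identity of `ℝⁿ`. -/
def IsEinstein {n : ℕ} (R : Module.End ℝ (so n)) : Prop :=
  ∃ c : ℝ, RicM R = c • (1 : Matrix (Fin n) (Fin n) ℝ)

lemma wedgeEnd_key {n : ℕ} (A B : Matrix (Fin n) (Fin n) ℝ) (M : so n) :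
    (A * M.1 * Bᵀ + B * M.1 * Aᵀ)ᵀ = -(A * M.1 * Bᵀ + B * M.1 * Aᵀ) := by
  have hM := so_skew M
  rw [Matrix.transpose_add, Matrix.transpose_mul, Matrix.transpose_mul,
    Matrix.transpose_mul, Matrix.transpose_mul, Matrix.transpose_transpose,
    Matrix.transpose_transpose, hM]
  simp only [Matrix.mul_neg, Matrix.neg_mul, Matrix.mul_assoc, neg_add]
  abel

/-- The wedge `A ∧ B` of two endomorphisms of `ℝⁿ`, as an endomorphism of `⋀²ℝⁿ ≅ so n`:
`(A ∧ B)(v ∧ w) = (1/2)(Av ∧ Bw + Bv ∧ Aw)`, i.e. `M ↦ (1/2)(A M Bᵀ + B M Aᵀ)`. -/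
def wedgeEnd {n : ℕ} (A B : Matrix (Fin n) (Fin n) ℝ) : Module.End ℝ (so n) where
  toFun M := ⟨(1 / 2 : ℝ) • (A * M.1 * Bᵀ + B * M.1 * Aᵀ), by
    rw [mem_so, Matrix.transpose_smul, wedgeEnd_key, smul_neg]⟩
  map_add' M N := by
    apply Subtype.ext
    simp [Matrix.mul_add, Matrix.add_mul, smul_add]
    abel
  map_smul' c M := by
    apply Subtype.ext
    simp [Matrix.mul_smul, Matrix.smul_mul, smul_smul, mul_comm]

/-- Inner product `⟨A, B⟩ = tr(A ∘ B)` on endomorphisms of `⋀²ℝⁿ` (the Frobenius inner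
product for self-adjoint operators). -/
def endIP {n : ℕ} (A B : Module.End ℝ (so n)) : ℝ := LinearMap.trace ℝ ↥(so n) (A * B)

/-- Norm of an endomorphism of `⋀²ℝⁿ` induced by `endIP`. -/
def endNorm {n : ℕ} (A : Module.End ℝ (so n)) : ℝ := Real.sqrt (endIP A A)

/-- Huisken's trilinear form `tri(A,B,C) = tr((AB + BA + 2 A#B) ∘ C) = 2⟨Q(A,B), C⟩`. -/
def tri {n : ℕ} (A B C : Module.End ℝ (so n)) : ℝ :=
  LinearMap.trace ℝ ↥(so n) ((A * B + B * A + (2 : ℝ) • sharp A B) * C)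

/-- The identity component `R_I = (s(R)/(n(n-1))) id ∧ id` of a curvature operator. -/
def compI {n : ℕ} (R : Module.End ℝ (so n)) : Module.End ℝ (so n) :=
  (scal R / ((n : ℝ) * ((n : ℝ) - 1))) • 1

/-- The traceless-Ricci component `R_{Ric₀} = (2/(n-2)) Ric₀(R) ∧ id`. -/
def compRic0 {n : ℕ} (R : Module.End ℝ (so n)) : Module.End ℝ (so n) :=
  (2 / ((n : ℝ) - 2)) • wedgeEnd (Ric0M R) 1

/-- The Weyl component `R_W = R - R_I - R_{Ric₀}`. -/
def compW {n : ℕ} (R : Module.End ℝ (so n)) : Module.End ℝ (so n) := R - compI R - compRic0 R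

/-- The derivative `DQ̃(R)` of the normalized vector field
`Q̃(R) = Q(R) - ‖Ric R‖² R` at `R`, applied to `A`:
`DQ̃(R)(A) = 2Q(R,A) - ‖Ric R‖² A - 2 tr(Ric R · Ric A) R`. -/
def DQt {n : ℕ} (R A : Module.End ℝ (so n)) : Module.End ℝ (so n) :=
  (2 : ℝ) • Qbil R A - ricNormSq R • A - (2 * (RicM R * RicM A).trace) • R


set_option linter.unusedSimpArgs false

/-- Element of `so 4` with coordinates in the (anti-)self-dual basis. -/
def mk4 (a b c d e f : ℝ) : so 4 :=
  ⟨!![0, a + d, b + e, c + f;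
      -(a + d), 0, c - f, -(b - e);
      -(b + e), -(c - f), 0, a - d;
      -(c + f), b - e, -(a - d), 0], by
    rw [mem_so]
    ext i j
    fin_cases i <;> fin_cases j <;> simp⟩

lemma mk4_surj (X : so 4) : ∃ a b c d e f : ℝ, X = mk4 a b c d e f := by
  refine ⟨(X.1 0 1 + X.1 2 3) / 2, (X.1 0 2 - X.1 1 3) / 2, (X.1 0 3 + X.1 1 2) / 2,
    (X.1 0 1 - X.1 2 3) / 2, (X.1 0 2 + X.1 1 3) / 2, (X.1 0 3 - X.1 1 2) / 2, ?_⟩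
  apply Subtype.ext
  have h := so_skew' X
  ext i j
  have h00 := h 0 0
  have h11 := h 1 1
  have h22 := h 2 2
  have h33 := h 3 3
  have h01 := h 0 1
  have h02 := h 0 2
  have h03 := h 0 3
  have h12 := h 1 2
  have h13 := h 1 3
  have h23 := h 2 3
  fin_cases i <;> fin_cases j <;> simp [mk4] <;> linarith

lemma mk4_add (a b c d e f a' b' c' d' e' f' : ℝ) :
    mk4 a b c d e f + mk4 a' b' c' d' e' f' =
      mk4 (a + a') (b + b') (c + c') (d + d') (e + e') (f + f') := by
  apply Subtype.ext
  ext i j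
  fin_cases i <;> fin_cases j <;> simp [mk4] <;> ring

lemma mk4_smul (t a b c d e f : ℝ) :
    t • mk4 a b c d e f = mk4 (t * a) (t * b) (t * c) (t * d) (t * e) (t * f) := by
  apply Subtype.ext
  ext i j
  fin_cases i <;> fin_cases j <;> simp [mk4] <;> ring

lemma mk4_zero : mk4 0 0 0 0 0 0 = 0 := by
  apply Subtype.ext
  ext i j
  fin_cases i <;> fin_cases j <;> simp [mk4]

lemma mk4_eq_zero {a b c d e f : ℝ} (h : mk4 a b c d e f = 0) :
    a = 0 ∧ b = 0 ∧ c = 0 ∧ d = 0 ∧ e = 0 ∧ f = 0 := by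
  have h' : ∀ i j, (mk4 a b c d e f).1 i j = 0 := by rw [h]; simp
  have h01 := h' 0 1
  have h02 := h' 0 2
  have h03 := h' 0 3
  have h12 := h' 1 2
  have h13 := h' 1 3
  have h23 := h' 2 3
  simp [mk4] at h01 h02 h03 h12 h13 h23
  refine ⟨?_, ?_, ?_, ?_, ?_, ?_⟩ <;> linarith

lemma mk4_ip (a b c d e f a' b' c' d' e' f' : ℝ) :
    ip (mk4 a b c d e f) (mk4 a' b' c' d' e' f') =
      2 * (a * a' + b * b' + c * c' + d * d' + e * e' + f * f') := by
  simp [ip, mk4, Matrix.trace, Fin.sum_univ_four]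
  ring

set_option maxHeartbeats 2000000 in
lemma mk4_brkt (a b c d e f a' b' c' d' e' f' : ℝ) :
    brkt (mk4 a b c d e f) (mk4 a' b' c' d' e' f') =
      mk4 (-2 * (b * c' - c * b')) (-2 * (c * a' - a * c')) (-2 * (a * b' - b * a'))
        (2 * (e * f' - f * e')) (2 * (f * d' - d * f')) (2 * (d * e' - e * d')) := by
  apply Subtype.ext
  ext i j
  fin_cases i <;> fin_cases j <;> simp [mk4, brkt] <;> ring

lemma om01 : omegaB ((0 : Fin 4), (1 : Fin 4)) = mk4 (1/2) 0 0 (1/2) 0 0 := by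
  apply Subtype.ext
  ext i j
  fin_cases i <;> fin_cases j <;> simp [mk4, omegaB, wedgeVec, stdVec] <;> norm_num
lemma om23 : omegaB ((2 : Fin 4), (3 : Fin 4)) = mk4 (1/2) 0 0 (-1/2) 0 0 := by
  apply Subtype.ext
  ext i j
  fin_cases i <;> fin_cases j <;> simp [mk4, omegaB, wedgeVec, stdVec] <;> norm_num
lemma om02 : omegaB ((0 : Fin 4), (2 : Fin 4)) = mk4 0 (1/2) 0 0 (1/2) 0 := by
  apply Subtype.ext
  ext i j
  fin_cases i <;> fin_cases j <;> simp [mk4, omegaB, wedgeVec, stdVec] <;> norm_num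
lemma om13 : omegaB ((1 : Fin 4), (3 : Fin 4)) = mk4 0 (-1/2) 0 0 (1/2) 0 := by
  apply Subtype.ext
  ext i j
  fin_cases i <;> fin_cases j <;> simp [mk4, omegaB, wedgeVec, stdVec] <;> norm_num
lemma om03 : omegaB ((0 : Fin 4), (3 : Fin 4)) = mk4 0 0 (1/2) 0 0 (1/2) := by
  apply Subtype.ext
  ext i j
  fin_cases i <;> fin_cases j <;> simp [mk4, omegaB, wedgeVec, stdVec] <;> norm_num
lemma om12 : omegaB ((1 : Fin 4), (2 : Fin 4)) = mk4 0 0 (1/2) 0 0 (-1/2) := by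
  apply Subtype.ext
  ext i j
  fin_cases i <;> fin_cases j <;> simp [mk4, omegaB, wedgeVec, stdVec] <;> norm_num

lemma pairs4_sum {M : Type*} [AddCommMonoid M] (F : Fin 4 × Fin 4 → M) :
    ∑ p ∈ pairs 4, F p = F (0, 1) + F (0, 2) + F (0, 3) + F (1, 2) + F (1, 3) + F (2, 3) := by
  have : pairs 4 = {(0, 1), (0, 2), (0, 3), (1, 2), (1, 3), (2, 3)} := by decide
  rw [this]
  simp [add_assoc]

/-- Traceless symmetric 3x3 with `A² + 2 cof A = 0` vanishes. -/
lemma sym3 {a b c d e f : ℝ} (ht : a + b + c = 0)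
    (h11 : a * a + d * d + e * e + 2 * (b * c - f * f) = 0)
    (h22 : d * d + b * b + f * f + 2 * (a * c - e * e) = 0)
    (h33 : e * e + f * f + c * c + 2 * (a * b - d * d) = 0)
    (h12 : a * d + d * b + e * f + 2 * (e * f - c * d) = 0)
    (h13 : a * e + d * f + e * c + 2 * (d * f - b * e) = 0)
    (h23 : d * e + b * f + f * c + 2 * (d * e - a * f) = 0) :
    a = 0 ∧ b = 0 ∧ c = 0 ∧ d = 0 ∧ e = 0 ∧ f = 0 := by
  have k12 : e * f - c * d = 0 := by linear_combination (h12 - d * ht) / 3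
  have k13 : d * f - b * e = 0 := by linear_combination (h13 - e * ht) / 3
  have k23 : d * e - a * f = 0 := by linear_combination (h23 - f * ht) / 3
  obtain ⟨k, hk⟩ : ∃ k, k = b * c - f * f := ⟨_, rfl⟩
  have k22 : a * c - e * e = k := by
    rw [hk]; linear_combination (h22 - h11 + (a - b) * ht) / 3
  have k33 : a * b - d * d = k := by
    rw [hk]; linear_combination (h33 - h11 + (a - c) * ht) / 3
  have ab : a * k - b * k = 0 := by
    linear_combination a * hk + b * k22 - e * k13 + f * k23
  have ac : a * k - c * k = 0 := by
    linear_combination a * hk + c * k33 - d * k12 + f * k23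
  have ak : a * k = 0 := by linear_combination (ab + ac + k * ht) / 3
  have bk : b * k = 0 := by linear_combination ak - ab
  have ck : c * k = 0 := by linear_combination ak - ac
  have dk : d * k = 0 := by linear_combination -d * k22 - a * k12 - e * k23
  have ek : e * k = 0 := by linear_combination -e * k33 - a * k13 - d * k23
  have fk : f * k = 0 := by linear_combination -f * k33 - d * k13 - b * k23
  have hS : a * a + b * b + c * c + 2 * (d * d + e * e + f * f) = -6 * k := by
    linear_combination h11 + h22 + h33 - 2 * (k22 + k33 - hk)
  have hkk : k * k = 0 := by
    linear_combination (k * hS - a * ak - b * bk - c * ck - 2 * (d * dk + e * ek + f * fk)) / 6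
  have hk0 : k = 0 := by simpa using hkk
  rw [hk0] at hS
  have sq : ∀ x : ℝ, x * x ≤ 0 → x = 0 := fun x hx => by
    have := mul_self_nonneg x
    exact mul_self_eq_zero.mp (le_antisymm hx this)
  refine ⟨sq _ ?_, sq _ ?_, sq _ ?_, sq _ ?_, sq _ ?_, sq _ ?_⟩ <;>
    nlinarith [mul_self_nonneg a, mul_self_nonneg b, mul_self_nonneg c, mul_self_nonneg d,
      mul_self_nonneg e, mul_self_nonneg f]

set_option maxHeartbeats 4000000 in
/-- The only algebraic curvature operator `R ∈ S²_B(⋀²ℝ⁴)` with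
`Q(R) = R² + R # R = 0` is the zero operator. -/
theorem stmt0 (R : Module.End ℝ (so 4)) (hACO : IsACO R) (hQ : Qop R = 0) : R = 0 := by
  have hs := hACO.1
  obtain ⟨r00, r01, r02, r03, r04, r05, h0⟩ := mk4_surj (R (mk4 1 0 0 0 0 0))
  obtain ⟨s10, r11, r12, r13, r14, r15, h1⟩ := mk4_surj (R (mk4 0 1 0 0 0 0))
  obtain ⟨s20, s21, r22, r23, r24, r25, h2⟩ := mk4_surj (R (mk4 0 0 1 0 0 0))
  obtain ⟨s30, s31, s32, r33, r34, r35, h3⟩ := mk4_surj (R (mk4 0 0 0 1 0 0))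
  obtain ⟨s40, s41, s42, s43, r44, r45, h4⟩ := mk4_surj (R (mk4 0 0 0 0 1 0))
  obtain ⟨s50, s51, s52, s53, s54, r55, h5⟩ := mk4_surj (R (mk4 0 0 0 0 0 1))
  have e10 : r01 = s10 := by
    have := hs (mk4 0 1 0 0 0 0) (mk4 1 0 0 0 0 0)
    rw [h1, h0, mk4_ip, mk4_ip] at this
    linarith
  have e20 : r02 = s20 := by
    have := hs (mk4 0 0 1 0 0 0) (mk4 1 0 0 0 0 0)
    rw [h2, h0, mk4_ip, mk4_ip] at this
    linarith
  have e21 : r12 = s21 := by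
    have := hs (mk4 0 0 1 0 0 0) (mk4 0 1 0 0 0 0)
    rw [h2, h1, mk4_ip, mk4_ip] at this
    linarith
  have e30 : r03 = s30 := by
    have := hs (mk4 0 0 0 1 0 0) (mk4 1 0 0 0 0 0)
    rw [h3, h0, mk4_ip, mk4_ip] at this
    linarith
  have e31 : r13 = s31 := by
    have := hs (mk4 0 0 0 1 0 0) (mk4 0 1 0 0 0 0)
    rw [h3, h1, mk4_ip, mk4_ip] at this
    linarith
  have e32 : r23 = s32 := by
    have := hs (mk4 0 0 0 1 0 0) (mk4 0 0 1 0 0 0)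
    rw [h3, h2, mk4_ip, mk4_ip] at this
    linarith
  have e40 : r04 = s40 := by
    have := hs (mk4 0 0 0 0 1 0) (mk4 1 0 0 0 0 0)
    rw [h4, h0, mk4_ip, mk4_ip] at this
    linarith
  have e41 : r14 = s41 := by
    have := hs (mk4 0 0 0 0 1 0) (mk4 0 1 0 0 0 0)
    rw [h4, h1, mk4_ip, mk4_ip] at this
    linarith
  have e42 : r24 = s42 := by
    have := hs (mk4 0 0 0 0 1 0) (mk4 0 0 1 0 0 0)
    rw [h4, h2, mk4_ip, mk4_ip] at this
    linarith
  have e43 : r34 = s43 := by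
    have := hs (mk4 0 0 0 0 1 0) (mk4 0 0 0 1 0 0)
    rw [h4, h3, mk4_ip, mk4_ip] at this
    linarith
  have e50 : r05 = s50 := by
    have := hs (mk4 0 0 0 0 0 1) (mk4 1 0 0 0 0 0)
    rw [h5, h0, mk4_ip, mk4_ip] at this
    linarith
  have e51 : r15 = s51 := by
    have := hs (mk4 0 0 0 0 0 1) (mk4 0 1 0 0 0 0)
    rw [h5, h1, mk4_ip, mk4_ip] at this
    linarith
  have e52 : r25 = s52 := by
    have := hs (mk4 0 0 0 0 0 1) (mk4 0 0 1 0 0 0)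
    rw [h5, h2, mk4_ip, mk4_ip] at this
    linarith
  have e53 : r35 = s53 := by
    have := hs (mk4 0 0 0 0 0 1) (mk4 0 0 0 1 0 0)
    rw [h5, h3, mk4_ip, mk4_ip] at this
    linarith
  have e54 : r45 = s54 := by
    have := hs (mk4 0 0 0 0 0 1) (mk4 0 0 0 0 1 0)
    rw [h5, h4, mk4_ip, mk4_ip] at this
    linarith
  subst e10 e20 e21 e30 e31 e32 e40 e41 e42 e43 e50 e51 e52 e53 e54
  have hR : ∀ a b c d e f : ℝ, R (mk4 a b c d e f) = mk4 (a * r00 + b * r01 + c * r02 + d * r03 + e * r04 + f * r05) (a * r01 + b * r11 + c * r12 + d * r13 + e * r14 + f * r15) (a * r02 + b * r12 + c * r22 + d * r23 + e * r24 + f * r25) (a * r03 + b * r13 + c * r23 + d * r33 + e * r34 + f * r35) (a * r04 + b * r14 + c * r24 + d * r34 + e * r44 + f * r45) (a * r05 + b * r15 + c * r25 + d * r35 + e * r45 + f * r55) := by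
    intro a b c d e f
    have : mk4 a b c d e f = a • mk4 1 0 0 0 0 0 + b • mk4 0 1 0 0 0 0 + c • mk4 0 0 1 0 0 0 + d • mk4 0 0 0 1 0 0 + e • mk4 0 0 0 0 1 0 + f • mk4 0 0 0 0 0 1 := by
      simp only [mk4_smul, mk4_add]
      congr 1 <;> ring
    rw [this]
    simp only [map_add, map_smul, h0, h1, h2, h3, h4, h5]
    simp only [mk4_smul, mk4_add]
  have hQ' : ∀ X, R (R X) + (1 / 2 : ℝ) • (∑ p ∈ pairs 4, ∑ q ∈ pairs 4,
      ip (brkt (R (omegaB p)) (R (omegaB q))) X • brkt (omegaB p) (omegaB q)) = 0 := by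
    intro X
    have := LinearMap.congr_fun hQ X
    simpa [Qop, sharp, ipL, LinearMap.sum_apply] using this
  simp only [pairs4_sum, om01, om02, om03, om12, om13, om23, mk4_brkt, hR, mul_zero, zero_mul, add_zero, zero_add, sub_zero, zero_sub, mul_one, one_mul, neg_zero, sub_self, mk4_zero, smul_zero] at hQ'
  have p0 : (r00 * r00 + r01 * r01 + r02 * r02 + r03 * r03 + r04 * r04 + r05 * r05 + 2 * (r11 * r22 - r12 * r12) = 0) ∧
      (r00 * r01 + r01 * r11 + r02 * r12 + r03 * r13 + r04 * r14 + r05 * r15 + 2 * (r12 * r02 - r01 * r22) = 0) ∧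
      (r00 * r02 + r01 * r12 + r02 * r22 + r03 * r23 + r04 * r24 + r05 * r25 + 2 * (r01 * r12 - r11 * r02) = 0) := by
    have q := hQ' (mk4 1 0 0 0 0 0)
    simp only [hR, mk4_ip, mk4_smul, mk4_add, mul_zero, zero_mul, add_zero, zero_add, sub_zero, zero_sub, mul_one, one_mul, neg_zero, sub_self] at q
    obtain ⟨q0, q1, q2, q3, q4, q5⟩ := mk4_eq_zero q
    clear q hQ' hR
    exact ⟨by linear_combination q0, by linear_combination q1, by linear_combination q2⟩
  have p1 : (r01 * r01 + r11 * r11 + r12 * r12 + r13 * r13 + r14 * r14 + r15 * r15 + 2 * (r22 * r00 - r02 * r02) = 0) ∧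
      (r01 * r02 + r11 * r12 + r12 * r22 + r13 * r23 + r14 * r24 + r15 * r25 + 2 * (r02 * r01 - r12 * r00) = 0) := by
    have q := hQ' (mk4 0 1 0 0 0 0)
    simp only [hR, mk4_ip, mk4_smul, mk4_add, mul_zero, zero_mul, add_zero, zero_add, sub_zero, zero_sub, mul_one, one_mul, neg_zero, sub_self] at q
    obtain ⟨q0, q1, q2, q3, q4, q5⟩ := mk4_eq_zero q
    clear q hQ' hR
    exact ⟨by linear_combination q1, by linear_combination q2⟩
  have p2 : (r02 * r02 + r12 * r12 + r22 * r22 + r23 * r23 + r24 * r24 + r25 * r25 + 2 * (r00 * r11 - r01 * r01) = 0) := by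
    have q := hQ' (mk4 0 0 1 0 0 0)
    simp only [hR, mk4_ip, mk4_smul, mk4_add, mul_zero, zero_mul, add_zero, zero_add, sub_zero, zero_sub, mul_one, one_mul, neg_zero, sub_self] at q
    obtain ⟨q0, q1, q2, q3, q4, q5⟩ := mk4_eq_zero q
    clear q hQ' hR
    linear_combination q2
  have p3 : (r03 * r03 + r13 * r13 + r23 * r23 + r33 * r33 + r34 * r34 + r35 * r35 + 2 * (r44 * r55 - r45 * r45) = 0) ∧
      (r03 * r04 + r13 * r14 + r23 * r24 + r33 * r34 + r34 * r44 + r35 * r45 + 2 * (r45 * r35 - r34 * r55) = 0) ∧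
      (r03 * r05 + r13 * r15 + r23 * r25 + r33 * r35 + r34 * r45 + r35 * r55 + 2 * (r34 * r45 - r44 * r35) = 0) := by
    have q := hQ' (mk4 0 0 0 1 0 0)
    simp only [hR, mk4_ip, mk4_smul, mk4_add, mul_zero, zero_mul, add_zero, zero_add, sub_zero, zero_sub, mul_one, one_mul, neg_zero, sub_self] at q
    obtain ⟨q0, q1, q2, q3, q4, q5⟩ := mk4_eq_zero q
    clear q hQ' hR
    exact ⟨by linear_combination q3, by linear_combination q4, by linear_combination q5⟩
  have p4 : (r04 * r04 + r14 * r14 + r24 * r24 + r34 * r34 + r44 * r44 + r45 * r45 + 2 * (r55 * r33 - r35 * r35) = 0) ∧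
      (r04 * r05 + r14 * r15 + r24 * r25 + r34 * r35 + r44 * r45 + r45 * r55 + 2 * (r35 * r34 - r45 * r33) = 0) := by
    have q := hQ' (mk4 0 0 0 0 1 0)
    simp only [hR, mk4_ip, mk4_smul, mk4_add, mul_zero, zero_mul, add_zero, zero_add, sub_zero, zero_sub, mul_one, one_mul, neg_zero, sub_self] at q
    obtain ⟨q0, q1, q2, q3, q4, q5⟩ := mk4_eq_zero q
    clear q hQ' hR
    exact ⟨by linear_combination q4, by linear_combination q5⟩
  have p5 : (r05 * r05 + r15 * r15 + r25 * r25 + r35 * r35 + r45 * r45 + r55 * r55 + 2 * (r33 * r44 - r34 * r34) = 0) := by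
    have q := hQ' (mk4 0 0 0 0 0 1)
    simp only [hR, mk4_ip, mk4_smul, mk4_add, mul_zero, zero_mul, add_zero, zero_add, sub_zero, zero_sub, mul_one, one_mul, neg_zero, sub_self] at q
    obtain ⟨q0, q1, q2, q3, q4, q5⟩ := mk4_eq_zero q
    clear q hQ' hR
    linear_combination q5
  clear hQ'
  obtain ⟨q00, q01, q02⟩ := p0
  obtain ⟨q11, q12⟩ := p1
  obtain ⟨q33, q34, q35⟩ := p3
  obtain ⟨q44, q45⟩ := p4
  have q22 := p2
  have q55 := p5
  have htr : (r00 + r11 + r22) * (r00 + r11 + r22) + (r33 + r44 + r55) * (r33 + r44 + r55)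
      + 2 * (r03 * r03 + r04 * r04 + r05 * r05 + r13 * r13 + r14 * r14 + r15 * r15 + r23 * r23 + r24 * r24 + r25 * r25) = 0 := by
    linear_combination q00 + q11 + q22 + q33 + q44 + q55
  have sq : ∀ x : ℝ, x * x ≤ 0 → x = 0 := fun x hx => by
    have := mul_self_nonneg x
    exact mul_self_eq_zero.mp (le_antisymm hx this)
  have n1 := mul_self_nonneg (r00 + r11 + r22)
  have n2 := mul_self_nonneg (r33 + r44 + r55)
  have nr03 := mul_self_nonneg r03
  have nr04 := mul_self_nonneg r04
  have nr05 := mul_self_nonneg r05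
  have nr13 := mul_self_nonneg r13
  have nr14 := mul_self_nonneg r14
  have nr15 := mul_self_nonneg r15
  have nr23 := mul_self_nonneg r23
  have nr24 := mul_self_nonneg r24
  have nr25 := mul_self_nonneg r25
  have tA := sq (r00 + r11 + r22) (by linarith only [htr, n1, n2, nr03, nr04, nr05, nr13, nr14, nr15, nr23, nr24, nr25])
  have tC := sq (r33 + r44 + r55) (by linarith only [htr, n1, n2, nr03, nr04, nr05, nr13, nr14, nr15, nr23, nr24, nr25])
  have zr03 := sq r03 (by linarith only [htr, n1, n2, nr03, nr04, nr05, nr13, nr14, nr15, nr23, nr24, nr25])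
  have zr04 := sq r04 (by linarith only [htr, n1, n2, nr03, nr04, nr05, nr13, nr14, nr15, nr23, nr24, nr25])
  have zr05 := sq r05 (by linarith only [htr, n1, n2, nr03, nr04, nr05, nr13, nr14, nr15, nr23, nr24, nr25])
  have zr13 := sq r13 (by linarith only [htr, n1, n2, nr03, nr04, nr05, nr13, nr14, nr15, nr23, nr24, nr25])
  have zr14 := sq r14 (by linarith only [htr, n1, n2, nr03, nr04, nr05, nr13, nr14, nr15, nr23, nr24, nr25])
  have zr15 := sq r15 (by linarith only [htr, n1, n2, nr03, nr04, nr05, nr13, nr14, nr15, nr23, nr24, nr25])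
  have zr23 := sq r23 (by linarith only [htr, n1, n2, nr03, nr04, nr05, nr13, nr14, nr15, nr23, nr24, nr25])
  have zr24 := sq r24 (by linarith only [htr, n1, n2, nr03, nr04, nr05, nr13, nr14, nr15, nr23, nr24, nr25])
  have zr25 := sq r25 (by linarith only [htr, n1, n2, nr03, nr04, nr05, nr13, nr14, nr15, nr23, nr24, nr25])
  subst zr03 zr04 zr05 zr13 zr14 zr15 zr23 zr24 zr25
  obtain ⟨a1, a2, a3, a4, a5, a6⟩ := sym3 (a := r00) (b := r11) (c := r22) (d := r01) (e := r02) (f := r12) tA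
    (by linear_combination q00)
    (by linear_combination q11)
    (by linear_combination q22)
    (by linear_combination q01)
    (by linear_combination q02)
    (by linear_combination q12)
  obtain ⟨c1, c2, c3, c4, c5, c6⟩ := sym3 (a := r33) (b := r44) (c := r55) (d := r34) (e := r35) (f := r45) tC
    (by linear_combination q33)
    (by linear_combination q44)
    (by linear_combination q55)
    (by linear_combination q34)
    (by linear_combination q35)
    (by linear_combination q45)
  subst a1 a2 a3 a4 a5 a6 c1 c2 c3 c4 c5 c6
  ext1 X
  obtain ⟨a, b, c, d, e, f, rfl⟩ := mk4_surj X
  rw [hR]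
  simp [mk4_zero]
end
end

section
/- Let R ∈ S²_B(⋀²ℝ⁴) be an Einstein algebraic curvature operator with s(R) = 1 satisfying Q(R) = ‖Ric(R)‖² R (equivalently Q(R) = (1/4)R). Then R preserves the orthogonal splitting ⋀²ℝ⁴ = ⋀⁺ ⊕ ⋀⁻ into the ±1 eigenspaces of the Hodge star, and the pair of eigenvalue multisets of R|_{⋀⁺} and R|_{⋀⁻} is, up to interchanging ⋀⁺ and ⋀⁻, one of: ({1/12,1/12,1/12}, {1/12,1/12,1/12}) (the normalized round S⁴), ({0,0,1/4}, {0,0,1/4}) (the normalized product S²×S²), or ({0,0,1/4}, {1/12,1/12,1/12}) (the normalized Fubini–Study ℂP²). In particular, up to the action of O(4), R is the curvature operator of a symmetric space with unit scalar curvature. -/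
open scoped BigOperators
open Matrix Filter

noncomputable section

/-- The Hodge star operator on `⋀²ℝ⁴ ≅ so 4` (for the standard orientation):
`∗(e_i ∧ e_j) = e_k ∧ e_l` for `(i,j,k,l)` an even permutation of `(0,1,2,3)`. -/
def hodge (M : so 4) : so 4 :=
  ⟨!![0, M.1 2 3, -(M.1 1 3), M.1 1 2;
      -(M.1 2 3), 0, M.1 0 3, -(M.1 0 2);
      M.1 1 3, -(M.1 0 3), 0, M.1 0 1;
      -(M.1 1 2), M.1 0 2, -(M.1 0 1), 0], by
    rw [mem_so]
    ext i j
    fin_cases i <;> fin_cases j <;>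
      simp [Matrix.transpose_apply]⟩

/-- Coordinates on `so 4` adapted to the Hodge star. -/
def mk6 (x1 x2 x3 y1 y2 y3 : ℝ) : so 4 :=
  ⟨!![0, x1, x2, x3; -x1, 0, y3, -y2; -x2, -y3, 0, y1; -x3, y2, -y1, 0], by
    rw [mem_so]
    ext i j
    fin_cases i <;> fin_cases j <;> simp [Matrix.transpose_apply]⟩

lemma mk6_eta (X : so 4) :
    X = mk6 (X.1 0 1) (X.1 0 2) (X.1 0 3) (X.1 2 3) (-(X.1 1 3)) (X.1 1 2) := by
  apply Subtype.ext
  have h := so_skew' X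
  ext i j
  have hd : ∀ i, X.1 i i = 0 := fun i => by linarith [h i i]
  fin_cases i <;> fin_cases j <;> simp [mk6, hd] <;> exact h _ _

lemma mk6_surj (X : so 4) : ∃ a b c d e f, X = mk6 a b c d e f :=
  ⟨_, _, _, _, _, _, mk6_eta X⟩

lemma mk6_inj {a b c d e f a' b' c' d' e' f' : ℝ} :
    mk6 a b c d e f = mk6 a' b' c' d' e' f' ↔
      a = a' ∧ b = b' ∧ c = c' ∧ d = d' ∧ e = e' ∧ f = f' := by
  constructor
  · intro h
    have h' : ∀ i j, (mk6 a b c d e f).1 i j = (mk6 a' b' c' d' e' f').1 i j := by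
      intro i j; rw [h]
    refine ⟨?_, ?_, ?_, ?_, ?_, ?_⟩
    · simpa [mk6] using h' 0 1
    · simpa [mk6] using h' 0 2
    · simpa [mk6] using h' 0 3
    · simpa [mk6] using h' 2 3
    · simpa [mk6] using h' 1 3
    · simpa [mk6] using h' 1 2
  · rintro ⟨rfl, rfl, rfl, rfl, rfl, rfl⟩; rfl

lemma mk6_add (a b c d e f a' b' c' d' e' f' : ℝ) :
    mk6 a b c d e f + mk6 a' b' c' d' e' f' =
      mk6 (a + a') (b + b') (c + c') (d + d') (e + e') (f + f') := by
  apply Subtype.ext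
  ext i j
  fin_cases i <;> fin_cases j <;> simp [mk6] <;> ring

lemma mk6_smul (t a b c d e f : ℝ) :
    t • mk6 a b c d e f = mk6 (t * a) (t * b) (t * c) (t * d) (t * e) (t * f) := by
  apply Subtype.ext
  ext i j
  fin_cases i <;> fin_cases j <;> simp [mk6]

lemma mk6_neg (a b c d e f : ℝ) :
    -mk6 a b c d e f = mk6 (-a) (-b) (-c) (-d) (-e) (-f) := by
  apply Subtype.ext
  ext i j
  fin_cases i <;> fin_cases j <;> simp [mk6]

lemma mk6_zero : mk6 0 0 0 0 0 0 = 0 := by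
  apply Subtype.ext
  ext i j
  fin_cases i <;> fin_cases j <;> simp [mk6]

lemma mk6_hodge (a b c d e f : ℝ) : hodge (mk6 a b c d e f) = mk6 d e f a b c := by
  apply Subtype.ext
  ext i j
  fin_cases i <;> fin_cases j <;> simp [mk6, hodge]

lemma mk6_ip (a b c d e f a' b' c' d' e' f' : ℝ) :
    ip (mk6 a b c d e f) (mk6 a' b' c' d' e' f') =
      a * a' + b * b' + c * c' + d * d' + e * e' + f * f' := by
  simp [mk6, ip, Matrix.trace, Fin.sum_univ_four]
  ring

lemma mk6_brkt (a b c d e f a' b' c' d' e' f' : ℝ) :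
    brkt (mk6 a b c d e f) (mk6 a' b' c' d' e' f') =
      mk6 (-(b * f' - f * b') + (c * e' - e * c'))
          (-(c * d' - d * c') + (a * f' - f * a'))
          (-(a * e' - e * a') + (b * d' - d * b'))
          (-(b * c' - c * b') - (e * f' - f * e'))
          (-(c * a' - a * c') - (f * d' - d * f'))
          (-(a * b' - b * a') - (d * e' - e * d')) := by
  apply Subtype.ext
  ext i j
  fin_cases i <;> fin_cases j <;>
    simp [mk6, brkt, Matrix.mul_apply, Fin.sum_univ_four] <;> ring

lemma mk6_wedge (i j : Fin 4) : wedgeVec (stdVec i) (stdVec j) =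
    mk6 ((wedgeVec (stdVec i) (stdVec j)).1 0 1) ((wedgeVec (stdVec i) (stdVec j)).1 0 2)
      ((wedgeVec (stdVec i) (stdVec j)).1 0 3) ((wedgeVec (stdVec i) (stdVec j)).1 2 3)
      (-((wedgeVec (stdVec i) (stdVec j)).1 1 3)) ((wedgeVec (stdVec i) (stdVec j)).1 1 2) :=
  mk6_eta _

lemma w00 (i : Fin 4) : wedgeVec (stdVec i) (stdVec i) = mk6 0 0 0 0 0 0 := by
  rw [mk6_wedge]; simp [wedgeVec]
lemma w01 : wedgeVec (stdVec (0 : Fin 4)) (stdVec 1) = mk6 1 0 0 0 0 0 := by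
  rw [mk6_wedge]; simp [wedgeVec, stdVec]
lemma w02 : wedgeVec (stdVec (0 : Fin 4)) (stdVec 2) = mk6 0 1 0 0 0 0 := by
  rw [mk6_wedge]; simp [wedgeVec, stdVec]
lemma w03 : wedgeVec (stdVec (0 : Fin 4)) (stdVec 3) = mk6 0 0 1 0 0 0 := by
  rw [mk6_wedge]; simp [wedgeVec, stdVec]
lemma w23 : wedgeVec (stdVec (2 : Fin 4)) (stdVec 3) = mk6 0 0 0 1 0 0 := by
  rw [mk6_wedge]; simp [wedgeVec, stdVec]
lemma w13 : wedgeVec (stdVec (1 : Fin 4)) (stdVec 3) = mk6 0 0 0 0 (-1) 0 := by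
  rw [mk6_wedge]; simp [wedgeVec, stdVec]
lemma w12 : wedgeVec (stdVec (1 : Fin 4)) (stdVec 2) = mk6 0 0 0 0 0 1 := by
  rw [mk6_wedge]; simp [wedgeVec, stdVec]
lemma w10 : wedgeVec (stdVec (1 : Fin 4)) (stdVec 0) = mk6 (-1) 0 0 0 0 0 := by
  rw [mk6_wedge]; simp [wedgeVec, stdVec]
lemma w20 : wedgeVec (stdVec (2 : Fin 4)) (stdVec 0) = mk6 0 (-1) 0 0 0 0 := by
  rw [mk6_wedge]; simp [wedgeVec, stdVec]
lemma w30 : wedgeVec (stdVec (3 : Fin 4)) (stdVec 0) = mk6 0 0 (-1) 0 0 0 := by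
  rw [mk6_wedge]; simp [wedgeVec, stdVec]
lemma w32 : wedgeVec (stdVec (3 : Fin 4)) (stdVec 2) = mk6 0 0 0 (-1) 0 0 := by
  rw [mk6_wedge]; simp [wedgeVec, stdVec]
lemma w31 : wedgeVec (stdVec (3 : Fin 4)) (stdVec 1) = mk6 0 0 0 0 1 0 := by
  rw [mk6_wedge]; simp [wedgeVec, stdVec]
lemma w21 : wedgeVec (stdVec (2 : Fin 4)) (stdVec 1) = mk6 0 0 0 0 0 (-1) := by
  rw [mk6_wedge]; simp [wedgeVec, stdVec]

lemma pairs4 : pairs 4 = {(0,1),(0,2),(0,3),(2,3),(1,3),(1,2)} := by decide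

/-- Explicit form of an Einstein curvature operator of unit scalar curvature. -/
lemma einstein_form (R : Module.End ℝ (so 4)) (hACO : IsACO R) (hEin : IsEinstein R)
    (hscal : scal R = 1) : ricNormSq R = 1 / 4 ∧
    ∃ a b c d e f a' b' c' d' e' f' : ℝ, a + d + f = 1 / 4 ∧ a' + d' + f' = 1 / 4 ∧
      (∀ x y z, R (mk6 x y z x y z) =
        mk6 (a * x + b * y + c * z) (b * x + d * y + e * z) (c * x + e * y + f * z)
          (a * x + b * y + c * z) (b * x + d * y + e * z) (c * x + e * y + f * z)) ∧
      (∀ x y z, R (mk6 x y z (-x) (-y) (-z)) =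
        mk6 (a' * x + b' * y + c' * z) (b' * x + d' * y + e' * z) (c' * x + e' * y + f' * z)
          (-(a' * x + b' * y + c' * z)) (-(b' * x + d' * y + e' * z))
          (-(c' * x + e' * y + f' * z))) := by
  obtain ⟨hS, hB⟩ := hACO
  obtain ⟨k, hk⟩ := hEin
  have hk4 : k = 1 / 4 := by
    rw [scal, hk] at hscal
    simp [Matrix.trace_smul] at hscal
    linarith
  refine ⟨by rw [ricNormSq, hk, hk4]; norm_num [Matrix.trace_smul], ?_⟩
  obtain ⟨p11, p12, p13, p14, p15, p16, h1⟩ := mk6_surj (R (mk6 1 0 0 0 0 0))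
  obtain ⟨p21, p22, p23, p24, p25, p26, h2⟩ := mk6_surj (R (mk6 0 1 0 0 0 0))
  obtain ⟨p31, p32, p33, p34, p35, p36, h3⟩ := mk6_surj (R (mk6 0 0 1 0 0 0))
  obtain ⟨p41, p42, p43, p44, p45, p46, h4⟩ := mk6_surj (R (mk6 0 0 0 1 0 0))
  obtain ⟨p51, p52, p53, p54, p55, p56, h5⟩ := mk6_surj (R (mk6 0 0 0 0 1 0))
  obtain ⟨p61, p62, p63, p64, p65, p66, h6⟩ := mk6_surj (R (mk6 0 0 0 0 0 1))
  have hR : ∀ x1 x2 x3 x4 x5 x6, R (mk6 x1 x2 x3 x4 x5 x6) =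
      mk6 (x1 * p11 + x2 * p21 + x3 * p31 + x4 * p41 + x5 * p51 + x6 * p61)
        (x1 * p12 + x2 * p22 + x3 * p32 + x4 * p42 + x5 * p52 + x6 * p62)
        (x1 * p13 + x2 * p23 + x3 * p33 + x4 * p43 + x5 * p53 + x6 * p63)
        (x1 * p14 + x2 * p24 + x3 * p34 + x4 * p44 + x5 * p54 + x6 * p64)
        (x1 * p15 + x2 * p25 + x3 * p35 + x4 * p45 + x5 * p55 + x6 * p65)
        (x1 * p16 + x2 * p26 + x3 * p36 + x4 * p46 + x5 * p56 + x6 * p66) := by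
    intro x1 x2 x3 x4 x5 x6
    have : mk6 x1 x2 x3 x4 x5 x6 = x1 • mk6 1 0 0 0 0 0 + x2 • mk6 0 1 0 0 0 0
        + x3 • mk6 0 0 1 0 0 0 + x4 • mk6 0 0 0 1 0 0 + x5 • mk6 0 0 0 0 1 0
        + x6 • mk6 0 0 0 0 0 1 := by
      simp [mk6_smul, mk6_add]
    rw [this]
    simp only [map_add, map_smul]
    simp only [h1, h2, h3, h4, h5, h6, mk6_smul, mk6_add]
  clear h1 h2 h3 h4 h5 h6
  have s12 := hS (mk6 1 0 0 0 0 0) (mk6 0 1 0 0 0 0)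
  have s13 := hS (mk6 1 0 0 0 0 0) (mk6 0 0 1 0 0 0)
  have s14 := hS (mk6 1 0 0 0 0 0) (mk6 0 0 0 1 0 0)
  have s15 := hS (mk6 1 0 0 0 0 0) (mk6 0 0 0 0 1 0)
  have s16 := hS (mk6 1 0 0 0 0 0) (mk6 0 0 0 0 0 1)
  have s23 := hS (mk6 0 1 0 0 0 0) (mk6 0 0 1 0 0 0)
  have s24 := hS (mk6 0 1 0 0 0 0) (mk6 0 0 0 1 0 0)
  have s25 := hS (mk6 0 1 0 0 0 0) (mk6 0 0 0 0 1 0)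
  have s26 := hS (mk6 0 1 0 0 0 0) (mk6 0 0 0 0 0 1)
  have s34 := hS (mk6 0 0 1 0 0 0) (mk6 0 0 0 1 0 0)
  have s35 := hS (mk6 0 0 1 0 0 0) (mk6 0 0 0 0 1 0)
  have s36 := hS (mk6 0 0 1 0 0 0) (mk6 0 0 0 0 0 1)
  have s45 := hS (mk6 0 0 0 1 0 0) (mk6 0 0 0 0 1 0)
  have s46 := hS (mk6 0 0 0 1 0 0) (mk6 0 0 0 0 0 1)
  have s56 := hS (mk6 0 0 0 0 1 0) (mk6 0 0 0 0 0 1)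
  have hb := hB (stdVec 0) (stdVec 1) (stdVec 2) (stdVec 3)
  have hr : ∀ i j, RicM R i j = if i = j then 1 / 4 else 0 := by
    intro i j; rw [hk, hk4]; simp [Matrix.one_apply]
  have r00 := hr 0 0
  have r01 := hr 0 1
  have r02 := hr 0 2
  have r03 := hr 0 3
  have r11 := hr 1 1
  have r12 := hr 1 2
  have r13 := hr 1 3
  have r22 := hr 2 2
  have r23 := hr 2 3
  have r33 := hr 3 3
  clear hr hS hB hk
  simp [w00, w01, w02, w03, w10, w20, w30, w12, w13, w23, w21, w31, w32, hR, mk6_ip, RicM,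
    Fin.sum_univ_four] at s12 s13 s14 s15 s16 s23 s24 s25 s26 s34 s35 s36 s45 s46 s56 hb r00 r01 r02 r03 r11 r12 r13 r22 r23 r33
  refine ⟨p11 + p14, p12 + p15, p13 + p16, p22 + p25, p23 + p26, p33 + p36,
    p11 - p14, p12 - p15, p13 - p16, p22 - p25, p23 - p26, p33 - p36,
    by linarith, by linarith, ?_, ?_⟩
  · have e1 : p44 = p11 := by linarith
    have e2 : p55 = p22 := by linarith
    have e3 : p66 = p33 := by linarith
    have e4 : p45 = p12 := by linarith
    have e5 : p46 = p13 := by linarith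
    have e6 : p56 = p23 := by linarith
    have e7 : p15 = p24 := by linarith
    have e8 : p16 = p34 := by linarith
    have e9 : p26 = p35 := by linarith
    intro x y z
    rw [hR, mk6_inj]
    subst_vars
    refine ⟨?_, ?_, ?_, ?_, ?_, ?_⟩ <;> ring
  · have e1 : p44 = p11 := by linarith
    have e2 : p55 = p22 := by linarith
    have e3 : p66 = p33 := by linarith
    have e4 : p45 = p12 := by linarith
    have e5 : p46 = p13 := by linarith
    have e6 : p56 = p23 := by linarith
    have e7 : p15 = p24 := by linarith
    have e8 : p16 = p34 := by linarith
    have e9 : p26 = p35 := by linarith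
    intro x y z
    rw [hR, mk6_inj]
    subst_vars
    refine ⟨?_, ?_, ?_, ?_, ?_, ?_⟩ <;> ring

/-- Diagonalization of the three by three blocks. -/
lemma block_diag (A : Matrix (Fin 3) (Fin 3) ℝ) (hA : Aᵀ = A) (ht : A.trace = 1 / 4)
    (hq : A * A + (2 : ℝ) • A.adjugate = (1 / 4 : ℝ) • A) :
    ∃ (U : Matrix (Fin 3) (Fin 3) ℝ) (l : Fin 3 → ℝ), Uᵀ * U = 1 ∧
      A * U = U * Matrix.diagonal l ∧
      (({l 0, l 1, l 2} : Multiset ℝ) = {1/12, 1/12, 1/12} ∨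
        ({l 0, l 1, l 2} : Multiset ℝ) = {0, 0, 1/4}) := by
  have hH : A.IsHermitian := by
    rw [Matrix.IsHermitian, Matrix.conjTranspose_eq_transpose_of_trivial, hA]
  obtain ⟨U, l, hU, hAU⟩ : ∃ (U : Matrix (Fin 3) (Fin 3) ℝ) (l : Fin 3 → ℝ), Uᵀ * U = 1 ∧
      A * U = U * Matrix.diagonal l := by
    refine ⟨hH.eigenvectorUnitary, hH.eigenvalues, ?_, ?_⟩
    · have := Unitary.coe_star_mul_self hH.eigenvectorUnitary
      simpa [Matrix.star_eq_conjTranspose] using this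
    · have h := hH.spectral_theorem
      have h2 := Unitary.coe_star_mul_self hH.eigenvectorUnitary
      rw [Unitary.conjStarAlgAut_apply] at h
      have h3 := congrArg (fun M => M * (hH.eigenvectorUnitary : Matrix (Fin 3) (Fin 3) ℝ)) h
      beta_reduce at h3
      rw [mul_assoc (_ * _), h2, mul_one] at h3
      exact h3
  refine ⟨U, l, hU, hAU, ?_⟩
  have hU' : U * Uᵀ = 1 := mul_eq_one_comm.mp hU
  have hAe : A = U * Matrix.diagonal l * Uᵀ := by
    rw [← hAU, mul_assoc, hU', mul_one]
  have hdet : U.det * U.det = 1 := by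
    have := congrArg Matrix.det hU
    simpa using this
  have htr : l 0 + l 1 + l 2 = 1 / 4 := by
    rw [← ht, hAe, Matrix.trace_mul_comm, ← mul_assoc, hU, one_mul]
    simp [Matrix.trace, Fin.sum_univ_three]
  have hadj : Uᵀ * A.adjugate * U = (Matrix.diagonal l).adjugate := by
    rw [hAe, Matrix.adjugate_mul_distrib, Matrix.adjugate_mul_distrib]
    calc _ = (Uᵀ * Uᵀ.adjugate) * (Matrix.diagonal l).adjugate * (U.adjugate * U) := by
          simp only [mul_assoc]
      _ = _ := by
          rw [Matrix.mul_adjugate, Matrix.adjugate_mul, Matrix.det_transpose]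
          simp [smul_smul, hdet]
  have hAA : Uᵀ * (A * A) * U = Matrix.diagonal l * Matrix.diagonal l := by
    rw [mul_assoc, mul_assoc, hAU, ← mul_assoc A, hAU, mul_assoc, ← mul_assoc, hU, one_mul]
  have hA1 : Uᵀ * A * U = Matrix.diagonal l := by
    rw [mul_assoc, hAU, ← mul_assoc, hU, one_mul]
  have key : Matrix.diagonal l * Matrix.diagonal l + (2 : ℝ) • (Matrix.diagonal l).adjugate
      = (1 / 4 : ℝ) • Matrix.diagonal l := by
    have := congrArg (fun M => Uᵀ * M * U) hq
    simpa [mul_add, add_mul, hAA, hadj, hA1] using this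
  have k0 := congrFun (congrFun key 0) 0
  have k1 := congrFun (congrFun key 1) 1
  have k2 := congrFun (congrFun key 2) 2
  have E0 : (Finset.univ.erase (0 : Fin 3)) = {1, 2} := by decide
  have E1 : (Finset.univ.erase (1 : Fin 3)) = {0, 2} := by decide
  have E2 : (Finset.univ.erase (2 : Fin 3)) = {0, 1} := by decide
  simp [E0, E1, E2] at k0 k1 k2
  clear key hAA hA1 hadj hAe hAU
  generalize l 0 = x at *
  generalize l 1 = y at *
  generalize l 2 = z at *
  have d1 : (x - y) * z = 0 := by linear_combination (-1/3) * (k0 - k1) + (1/3) * (x - y) * htr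
  have d2 : (y - z) * x = 0 := by linear_combination (-1/3) * (k1 - k2) + (1/3) * (y - z) * htr
  have d3 : (x - z) * y = 0 := by linear_combination (-1/3) * (k0 - k2) + (1/3) * (x - z) * htr
  have P1 : ({0, 1/4, 0} : Multiset ℝ) = {0, 0, 1/4} := by
    exact congrArg (fun s => (0 : ℝ) ::ₘ s) (Multiset.pair_comm (1/4) 0)
  have P2 : ({1/4, 0, 0} : Multiset ℝ) = {0, 0, 1/4} := by
    rw [← P1]; exact Multiset.cons_swap _ _ _
  rcases mul_eq_zero.mp d1 with h1 | h1
  · have hxy : y = x := by linarith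
    subst hxy
    rcases mul_eq_zero.mp d2 with h2 | h2
    · left
      have : y = 1/12 := by linarith
      have hz : z = 1/12 := by linarith
      rw [this, hz]
    · right
      have hz : z = 1/4 := by linarith
      rw [h2, hz]
  · subst h1
    right
    rcases mul_eq_zero.mp d2 with h2 | h2
    · have hy : y = 0 := by linarith
      have hx : x = 1/4 := by linarith
      rw [hx, hy, P2]
    · have hy : y = 1/4 := by linarith
      rw [h2, hy, P1]

lemma full_form (R : Module.End ℝ (so 4)) (a b c d e f a' b' c' d' e' f' : ℝ)
    (hp : ∀ x y z, R (mk6 x y z x y z) =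
        mk6 (a * x + b * y + c * z) (b * x + d * y + e * z) (c * x + e * y + f * z)
          (a * x + b * y + c * z) (b * x + d * y + e * z) (c * x + e * y + f * z))
    (hm : ∀ x y z, R (mk6 x y z (-x) (-y) (-z)) =
        mk6 (a' * x + b' * y + c' * z) (b' * x + d' * y + e' * z) (c' * x + e' * y + f' * z)
          (-(a' * x + b' * y + c' * z)) (-(b' * x + d' * y + e' * z))
          (-(c' * x + e' * y + f' * z))) (x y z u v w : ℝ) :
    R (mk6 x y z u v w) =
      mk6 ((a * (x + u) + b * (y + v) + c * (z + w)) / 2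
            + (a' * (x - u) + b' * (y - v) + c' * (z - w)) / 2)
        ((b * (x + u) + d * (y + v) + e * (z + w)) / 2
            + (b' * (x - u) + d' * (y - v) + e' * (z - w)) / 2)
        ((c * (x + u) + e * (y + v) + f * (z + w)) / 2
            + (c' * (x - u) + e' * (y - v) + f' * (z - w)) / 2)
        ((a * (x + u) + b * (y + v) + c * (z + w)) / 2
            - (a' * (x - u) + b' * (y - v) + c' * (z - w)) / 2)
        ((b * (x + u) + d * (y + v) + e * (z + w)) / 2
            - (b' * (x - u) + d' * (y - v) + e' * (z - w)) / 2)
        ((c * (x + u) + e * (y + v) + f * (z + w)) / 2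
            - (c' * (x - u) + e' * (y - v) + f' * (z - w)) / 2) := by
  have h : mk6 x y z u v w =
      mk6 ((x + u) / 2) ((y + v) / 2) ((z + w) / 2) ((x + u) / 2) ((y + v) / 2) ((z + w) / 2)
      + mk6 ((x - u) / 2) ((y - v) / 2) ((z - w) / 2)
        (-((x - u) / 2)) (-((y - v) / 2)) (-((z - w) / 2)) := by
    rw [mk6_add, mk6_inj]
    refine ⟨?_, ?_, ?_, ?_, ?_, ?_⟩ <;> ring
  rw [h, map_add, hp, hm, mk6_add, mk6_inj]
  refine ⟨?_, ?_, ?_, ?_, ?_, ?_⟩ <;> ring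

lemma ip_comm4 (X Y : so 4) : ip X Y = ip Y X := by
  rw [ip, ip, Matrix.trace_mul_comm]

lemma brkt_self0 (X : so 4) : brkt X X = 0 := by
  apply Subtype.ext; simp [brkt]

lemma brkt_swap (X Y : so 4) : brkt Y X = -brkt X Y := by
  apply Subtype.ext; simp [brkt]

lemma ip_neg_left (X Y : so 4) : ip (-X) Y = -ip X Y := by
  simp [ip]

/-- The sharp square in the coordinates `mk6`. -/
lemma sharp_formula (R : Module.End ℝ (so 4)) (X : so 4) :
    sharp R R X =
      mk6 (ip (brkt (R (mk6 0 0 0 0 1 0)) (R (mk6 0 0 1 0 0 0))) X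
            * (-1) + ip (brkt (R (mk6 0 1 0 0 0 0)) (R (mk6 0 0 0 0 0 1))) X * (-1))
        (ip (brkt (R (mk6 0 0 0 0 0 1)) (R (mk6 1 0 0 0 0 0))) X
            * (-1) + ip (brkt (R (mk6 0 0 1 0 0 0)) (R (mk6 0 0 0 1 0 0))) X * (-1))
        (ip (brkt (R (mk6 0 0 0 1 0 0)) (R (mk6 0 1 0 0 0 0))) X
            * (-1) + ip (brkt (R (mk6 1 0 0 0 0 0)) (R (mk6 0 0 0 0 1 0))) X * (-1))
        (ip (brkt (R (mk6 0 1 0 0 0 0)) (R (mk6 0 0 1 0 0 0))) X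
            * (-1) + ip (brkt (R (mk6 0 0 0 0 1 0)) (R (mk6 0 0 0 0 0 1))) X * (-1))
        (ip (brkt (R (mk6 0 0 1 0 0 0)) (R (mk6 1 0 0 0 0 0))) X
            * (-1) + ip (brkt (R (mk6 0 0 0 0 0 1)) (R (mk6 0 0 0 1 0 0))) X * (-1))
        (ip (brkt (R (mk6 1 0 0 0 0 0)) (R (mk6 0 1 0 0 0 0))) X
            * (-1) + ip (brkt (R (mk6 0 0 0 1 0 0)) (R (mk6 0 0 0 0 1 0))) X * (-1)) := by
  have hs : mk6 0 0 0 0 (-1) 0 = -mk6 0 0 0 0 1 0 := by simp [mk6_neg]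
  have hn : ∀ Y : so 4, brkt (-Y) = fun Z => -brkt Y Z := by
    intro Y; funext Z; apply Subtype.ext; simp [brkt]; abel
  have hn' : ∀ Y Z : so 4, brkt Y (-Z) = -brkt Y Z := by
    intro Y Z; apply Subtype.ext; simp [brkt]; abel
  have hw : ∀ Y Z, ip (brkt (R Z) (R Y)) X = - ip (brkt (R Y) (R Z)) X := by
    intro Y Z; rw [brkt_swap, ip_neg_left]
  have hh : ∀ Y Z : so 4, ipL Y Z = ip Y Z := fun _ _ => rfl
  rw [sharp, pairs4]
  simp only [omegaB, LinearMap.smul_apply, LinearMap.sum_apply, LinearMap.smulRight_apply, hh]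
  repeat rw [Finset.sum_insert (by decide)]
  rw [Finset.sum_singleton]
  simp only [Finset.sum_insert (show ((0,1) : Fin 4 × Fin 4) ∉ ({(0,2),(0,3),(2,3),(1,3),(1,2)} : Finset _) by decide),
    Finset.sum_insert (show ((0,2) : Fin 4 × Fin 4) ∉ ({(0,3),(2,3),(1,3),(1,2)} : Finset _) by decide),
    Finset.sum_insert (show ((0,3) : Fin 4 × Fin 4) ∉ ({(2,3),(1,3),(1,2)} : Finset _) by decide),
    Finset.sum_insert (show ((2,3) : Fin 4 × Fin 4) ∉ ({(1,3),(1,2)} : Finset _) by decide),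
    Finset.sum_insert (show ((1,3) : Fin 4 × Fin 4) ∉ ({(1,2)} : Finset _) by decide),
    Finset.sum_singleton, w01, w02, w03, w23, w13, w12]
  simp only [hs, map_neg, hn, hn', ip_neg_left]
  simp only [mk6_brkt, mk6_neg, mk6_smul, mk6_add]
  rw [mk6_inj]
  rw [hw (mk6 0 0 0 0 1 0) (mk6 0 0 1 0 0 0), hw (mk6 0 1 0 0 0 0) (mk6 0 0 0 0 0 1),
    hw (mk6 0 0 0 0 0 1) (mk6 1 0 0 0 0 0), hw (mk6 0 0 1 0 0 0) (mk6 0 0 0 1 0 0),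
    hw (mk6 0 0 0 1 0 0) (mk6 0 1 0 0 0 0), hw (mk6 1 0 0 0 0 0) (mk6 0 0 0 0 1 0),
    hw (mk6 0 1 0 0 0 0) (mk6 0 0 1 0 0 0), hw (mk6 0 0 0 0 1 0) (mk6 0 0 0 0 0 1),
    hw (mk6 0 0 1 0 0 0) (mk6 1 0 0 0 0 0), hw (mk6 0 0 0 0 0 1) (mk6 0 0 0 1 0 0),
    hw (mk6 1 0 0 0 0 0) (mk6 0 1 0 0 0 0), hw (mk6 0 0 0 1 0 0) (mk6 0 0 0 0 1 0)]
  refine ⟨?_, ?_, ?_, ?_, ?_, ?_⟩ <;> ring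

/-- The symmetric three by three matrix with given entries. -/
def sym3_s1 (a b c d e f : ℝ) : Matrix (Fin 3) (Fin 3) ℝ := !![a, b, c; b, d, e; c, e, f]

set_option maxHeartbeats 2000000 in
lemma block_eq (R : Module.End ℝ (so 4)) (hQ : Qop R = (1 / 4 : ℝ) • R)
    (a b c d e f a' b' c' d' e' f' : ℝ)
    (hp : ∀ x y z, R (mk6 x y z x y z) =
        mk6 (a * x + b * y + c * z) (b * x + d * y + e * z) (c * x + e * y + f * z)
          (a * x + b * y + c * z) (b * x + d * y + e * z) (c * x + e * y + f * z))
    (hm : ∀ x y z, R (mk6 x y z (-x) (-y) (-z)) =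
        mk6 (a' * x + b' * y + c' * z) (b' * x + d' * y + e' * z) (c' * x + e' * y + f' * z)
          (-(a' * x + b' * y + c' * z)) (-(b' * x + d' * y + e' * z))
          (-(c' * x + e' * y + f' * z))) :
    (sym3_s1 a b c d e f * sym3_s1 a b c d e f + (2 : ℝ) • (sym3_s1 a b c d e f).adjugate
      = (1 / 4 : ℝ) • sym3_s1 a b c d e f) ∧
    (sym3_s1 a' b' c' d' e' f' * sym3_s1 a' b' c' d' e' f'
      + (2 : ℝ) • (sym3_s1 a' b' c' d' e' f').adjugate
      = (1 / 4 : ℝ) • sym3_s1 a' b' c' d' e' f') := by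
  have hR := full_form R a b c d e f a' b' c' d' e' f' hp hm
  clear hp hm
  have hX : ∀ X, R (R X) + sharp R R X = (1 / 4 : ℝ) • R X := by
    intro X
    have := LinearMap.congr_fun hQ X
    simpa [Qop] using this
  have q1 := hX (mk6 1 0 0 1 0 0)
  have q2 := hX (mk6 0 1 0 0 1 0)
  have q3 := hX (mk6 0 0 1 0 0 1)
  have q4 := hX (mk6 1 0 0 (-1) 0 0)
  have q5 := hX (mk6 0 1 0 0 (-1) 0)
  have q6 := hX (mk6 0 0 1 0 0 (-1))
  clear hX hQ
  simp only [sharp_formula, hR, mk6_brkt, mk6_ip, mk6_smul, mk6_add, mk6_inj]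
    at q1 q2 q3 q4 q5 q6
  obtain ⟨q11, q12, q13, -⟩ := q1
  obtain ⟨q21, q22, q23, -⟩ := q2
  obtain ⟨q31, q32, q33, -⟩ := q3
  obtain ⟨q41, q42, q43, -⟩ := q4
  obtain ⟨q51, q52, q53, -⟩ := q5
  obtain ⟨q61, q62, q63, -⟩ := q6
  constructor
  · ext i j
    fin_cases i <;> fin_cases j <;>
      simp [sym3_s1, Matrix.adjugate_fin_three, Matrix.mul_apply, Fin.sum_univ_three]
    · linear_combination q11
    · linear_combination q12
    · linear_combination q13
    · linear_combination q21
    · linear_combination q22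
    · linear_combination q23
    · linear_combination q31
    · linear_combination q32
    · linear_combination q33
  · ext i j
    fin_cases i <;> fin_cases j <;>
      simp [sym3_s1, Matrix.adjugate_fin_three, Matrix.mul_apply, Fin.sum_univ_three]
    · linear_combination q41
    · linear_combination q42
    · linear_combination q43
    · linear_combination q51
    · linear_combination q52
    · linear_combination q53
    · linear_combination q61
    · linear_combination q62
    · linear_combination q63

/-- Let `R ∈ S²_B(⋀²ℝ⁴)` be an Einstein algebraic curvature operator
with `s(R) = 1` and `Q(R) = ‖Ric(R)‖² R`.  Then `R` preserves the splitting
`⋀²ℝ⁴ = ⋀⁺ ⊕ ⋀⁻` into the `±1` eigenspaces of the Hodge star, and there is an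
orthonormal eigenbasis `ξ` of `R` adapted to the splitting whose pair of eigenvalue
multisets on `⋀⁺` and `⋀⁻` is, up to interchanging the factors, one of:
`({1/12,1/12,1/12},{1/12,1/12,1/12})` (round `S⁴`), `({0,0,1/4},{0,0,1/4})`
(`S² × S²`), or `({0,0,1/4},{1/12,1/12,1/12})` (Fubini–Study `ℂP²`); i.e. up to `O(4)`,
`R` is the curvature operator of a symmetric space with unit scalar curvature. -/
theorem stmt1 (R : Module.End ℝ (so 4)) (hACO : IsACO R) (hEin : IsEinstein R)
    (hscal : scal R = 1) (hQ : Qop R = ricNormSq R • R) :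
    (∀ M : so 4, hodge M = M → hodge (R M) = R M) ∧
    (∀ M : so 4, hodge M = -M → hodge (R M) = -(R M)) ∧
    ∃ (ξ : Fin 6 → so 4) (μ : Fin 6 → ℝ),
      (∀ i j : Fin 6, ip (ξ i) (ξ j) = if i = j then (1 : ℝ) else 0) ∧
      (∀ i : Fin 6, (i : ℕ) < 3 → hodge (ξ i) = ξ i) ∧
      (∀ i : Fin 6, 3 ≤ (i : ℕ) → hodge (ξ i) = -(ξ i)) ∧
      (∀ i : Fin 6, R (ξ i) = μ i • ξ i) ∧
      ((({μ 0, μ 1, μ 2} : Multiset ℝ) = {1/12, 1/12, 1/12} ∧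
          ({μ 3, μ 4, μ 5} : Multiset ℝ) = {1/12, 1/12, 1/12}) ∨
       (({μ 0, μ 1, μ 2} : Multiset ℝ) = {0, 0, 1/4} ∧
          ({μ 3, μ 4, μ 5} : Multiset ℝ) = {0, 0, 1/4}) ∨
       (({μ 0, μ 1, μ 2} : Multiset ℝ) = {0, 0, 1/4} ∧
          ({μ 3, μ 4, μ 5} : Multiset ℝ) = {1/12, 1/12, 1/12}) ∨
       (({μ 0, μ 1, μ 2} : Multiset ℝ) = {1/12, 1/12, 1/12} ∧
          ({μ 3, μ 4, μ 5} : Multiset ℝ) = {0, 0, 1/4})) := by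
  obtain ⟨hn, a, b, c, d, e, f, a', b', c', d', e', f', ht, ht', hp, hm⟩ :=
    einstein_form R hACO hEin hscal
  rw [hn] at hQ
  obtain ⟨hA, hB⟩ := block_eq R hQ a b c d e f a' b' c' d' e' f' hp hm
  have hsym : ∀ a b c d e f : ℝ, (sym3_s1 a b c d e f)ᵀ = sym3_s1 a b c d e f := by
    intro a b c d e f
    ext i j
    fin_cases i <;> fin_cases j <;> simp [sym3_s1]
  have htr : ∀ a b c d e f : ℝ, (sym3_s1 a b c d e f).trace = a + d + f := by
    intro a b c d e f
    simp [sym3_s1, Matrix.trace, Fin.sum_univ_three]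
  obtain ⟨U, l, hU, hUl, hl⟩ := block_diag _ (hsym a b c d e f) (by rw [htr, ht]) hA
  obtain ⟨V, m, hV, hVm, hm'⟩ := block_diag _ (hsym a' b' c' d' e' f') (by rw [htr, ht']) hB
  refine ⟨?_, ?_, ?_⟩
  · intro M hM
    obtain ⟨x, y, z, u, v, w, rfl⟩ := mk6_surj M
    rw [mk6_hodge, mk6_inj] at hM
    obtain ⟨rfl, rfl, rfl, -⟩ := hM
    rw [hp, mk6_hodge]
  · intro M hM
    obtain ⟨x, y, z, u, v, w, rfl⟩ := mk6_surj M
    rw [mk6_hodge, mk6_neg, mk6_inj] at hM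
    obtain ⟨rfl, rfl, rfl, -⟩ := hM
    rw [hm, mk6_hodge, mk6_neg]
    simp only [neg_neg]
  have hs : (1 / √2 : ℝ) * (1 / √2) = 1 / 2 := by
    rw [div_mul_div_comm, Real.mul_self_sqrt (by norm_num)]; norm_num
  generalize (1 / √2 : ℝ) = s at hs
  let P : Fin 3 → so 4 := fun i =>
    mk6 (s * U 0 i) (s * U 1 i) (s * U 2 i) (s * U 0 i) (s * U 1 i) (s * U 2 i)
  let N : Fin 3 → so 4 := fun i =>
    mk6 (s * V 0 i) (s * V 1 i) (s * V 2 i) (-(s * V 0 i)) (-(s * V 1 i)) (-(s * V 2 i))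
  have hPP : ∀ i j, ip (P i) (P j) = if i = j then 1 else 0 := by
    intro i j
    have := congrFun (congrFun hU i) j
    rw [Matrix.mul_apply, Fin.sum_univ_three, Matrix.one_apply] at this
    simp only [Matrix.transpose_apply] at this
    rw [← this, mk6_ip]
    linear_combination 2 * (U 0 i * U 0 j + U 1 i * U 1 j + U 2 i * U 2 j) * hs
  have hNN : ∀ i j, ip (N i) (N j) = if i = j then 1 else 0 := by
    intro i j
    have := congrFun (congrFun hV i) j
    rw [Matrix.mul_apply, Fin.sum_univ_three, Matrix.one_apply] at this
    simp only [Matrix.transpose_apply] at this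
    rw [← this, mk6_ip]
    linear_combination 2 * (V 0 i * V 0 j + V 1 i * V 1 j + V 2 i * V 2 j) * hs
  have hPN : ∀ i j, ip (P i) (N j) = 0 := by
    intro i j; rw [mk6_ip]; ring
  have hNP : ∀ i j, ip (N i) (P j) = 0 := by
    intro i j; rw [mk6_ip]; ring
  have hPh : ∀ i, hodge (P i) = P i := fun i => mk6_hodge _ _ _ _ _ _
  have hNh : ∀ i, hodge (N i) = -N i := by
    intro i
    simp only [N, mk6_hodge, mk6_neg, neg_neg]
  have hPe : ∀ i, R (P i) = l i • P i := by
    intro i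
    have h0 := congrFun (congrFun hUl 0) i
    have h1 := congrFun (congrFun hUl 1) i
    have h2 := congrFun (congrFun hUl 2) i
    rw [Matrix.mul_apply, Fin.sum_univ_three, Matrix.mul_diagonal] at h0 h1 h2
    simp [sym3_s1] at h0 h1 h2
    simp only [P]
    rw [hp, mk6_smul, mk6_inj]
    refine ⟨?_, ?_, ?_, ?_, ?_, ?_⟩
    · linear_combination s * h0
    · linear_combination s * h1
    · linear_combination s * h2
    · linear_combination s * h0
    · linear_combination s * h1
    · linear_combination s * h2
  have hNe : ∀ i, R (N i) = m i • N i := by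
    intro i
    have h0 := congrFun (congrFun hVm 0) i
    have h1 := congrFun (congrFun hVm 1) i
    have h2 := congrFun (congrFun hVm 2) i
    rw [Matrix.mul_apply, Fin.sum_univ_three, Matrix.mul_diagonal] at h0 h1 h2
    simp [sym3_s1] at h0 h1 h2
    simp only [N]
    rw [hm, mk6_smul, mk6_inj]
    refine ⟨?_, ?_, ?_, ?_, ?_, ?_⟩
    · linear_combination s * h0
    · linear_combination s * h1
    · linear_combination s * h2
    · linear_combination -s * h0
    · linear_combination -s * h1
    · linear_combination -s * h2
  clear_value P N
  refine ⟨![P 0, P 1, P 2, N 0, N 1, N 2], ![l 0, l 1, l 2, m 0, m 1, m 2], ?_, ?_, ?_, ?_, ?_⟩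
  · intro i j
    fin_cases i <;> fin_cases j <;> simp [hPP, hNN, hPN, hNP]
  · intro i hi
    fin_cases i <;> simp [hPh] at hi ⊢
  · intro i hi
    fin_cases i <;> simp [hNh] at hi ⊢
  · intro i
    fin_cases i <;> simp [hPe, hNe]
  · change (({l 0, l 1, l 2} : Multiset ℝ) = _ ∧ ({m 0, m 1, m 2} : Multiset ℝ) = _) ∨
      (({l 0, l 1, l 2} : Multiset ℝ) = _ ∧ ({m 0, m 1, m 2} : Multiset ℝ) = _) ∨
      (({l 0, l 1, l 2} : Multiset ℝ) = _ ∧ ({m 0, m 1, m 2} : Multiset ℝ) = _) ∨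
      (({l 0, l 1, l 2} : Multiset ℝ) = _ ∧ ({m 0, m 1, m 2} : Multiset ℝ) = _)
    tauto
end
end

section
/- Let n ≥ 3 and let R ∈ S²_B(⋀²ℝ^{n+1}) be an algebraic curvature operator of Ricci type (R_W = 0) with s(R) = 1 which is not a scalar multiple of id ∧ id, and suppose Q(R) = ‖Ric(R)‖² R. Then there is an orthonormal basis of ℝ^{n+1} in which Ric₀(R) is diagonal with eigenvalue 1/(n(n+1)) of multiplicity n and eigenvalue −1/(n+1) of multiplicity 1; that is, up to the action of the orthogonal group O(n+1), R is the curvature operator of Sⁿ × ℝ with the standard product metric normalized to unit scalar curvature. -/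
open scoped BigOperators
open Matrix Filter

noncomputable section

/-! ### Auxiliary lemmas -/

lemma aux_omega {n : ℕ} (i j : Fin n) :
    (omegaB (i, j)).1 = Matrix.single i j (1 : ℝ) - Matrix.single j i 1 := by
  ext a b
  simp only [omegaB, wedgeVec, stdVec, Matrix.of_apply, Matrix.sub_apply, Matrix.single_apply,
    Pi.single_apply]
  by_cases h1 : a = i <;> by_cases h2 : b = j <;> by_cases h3 : a = j <;> by_cases h4 : b = i <;>
    simp [h1, h2, h3, h4, eq_comm] <;> grind

lemma aux_pairs {n : ℕ} {M : Type*} [AddCommGroup M] (f : Fin n × Fin n → M)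
    (hs : ∀ i j, f (i, j) = f (j, i)) (h0 : ∀ i, f (i, i) = 0) :
    ∑ i, ∑ j, f (i, j) = ∑ p ∈ pairs n, f p + ∑ p ∈ pairs n, f p := by
  have h : ∑ i, ∑ j, f (i, j) = ∑ i, ∑ j, ((if i < j then f (i, j) else 0)
      + (if j < i then f (j, i) else 0)) := by
    refine Finset.sum_congr rfl fun i _ => Finset.sum_congr rfl fun j _ => ?_
    rcases lt_trichotomy i j with h | h | h
    · simp [h, h.le, not_lt.mpr]
    · subst h; simp [h0]
    · simp [h, h.le, not_lt.mpr, hs i j]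
  have h2 : ∑ p ∈ pairs n, f p = ∑ i, ∑ j, (if i < j then f (i, j) else 0) := by
    rw [pairs, Finset.sum_filter, Fintype.sum_prod_type]
  rw [h, h2]
  simp only [Finset.sum_add_distrib]
  congr 1
  rw [Finset.sum_comm]

lemma aux_sandwich {n : ℕ} (M : Matrix (Fin n) (Fin n) ℝ) :
    ∑ p ∈ pairs n, (omegaB p).1 * M * (omegaB p).1 = Mᵀ - M.trace • 1 := by
  have h := aux_pairs (fun p => (omegaB p).1 * M * (omegaB p).1) (by
      intro i j
      simp only [aux_omega]
      noncomm_ring) (by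
      intro i
      simp only [aux_omega]
      simp)
  have h2 : ∑ i, ∑ j, ((omegaB (i, j)).1 * M * (omegaB (i, j)).1)
      = (2 : ℝ) • (Mᵀ - M.trace • (1 : Matrix (Fin n) (Fin n) ℝ)) := by
    simp only [aux_omega, sub_mul, mul_sub, Matrix.single_mul_mul_single, one_mul, mul_one]
    ext a b
    simp only [Matrix.sum_apply, Matrix.sub_apply, Matrix.single_apply, Finset.sum_sub_distrib,
      Matrix.smul_apply, Matrix.transpose_apply, Matrix.one_apply, Matrix.trace, Matrix.diag_apply,
      ite_and, Finset.sum_ite_eq, Finset.sum_ite_eq', Finset.mem_univ, if_true]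
    simp
    by_cases hab : a = b
    · subst hab; simp; ring
    · simp [hab]; ring
  rw [h2] at h
  have h3 : (2 : ℝ) • (∑ p ∈ pairs n, (omegaB p).1 * M * (omegaB p).1)
      = (2 : ℝ) • (Mᵀ - M.trace • 1) := by
    rw [h, two_smul]
  exact smul_right_injective _ (two_ne_zero) h3

lemma aux_complete {n : ℕ} (Y : so n) :
    ∑ p ∈ pairs n, ip (omegaB p) Y • omegaB p = Y := by
  apply Subtype.ext
  have hip : ∀ i j, ip (omegaB (i, j)) Y = Y.1 i j := by
    intro i j
    rw [ip, aux_omega, sub_mul, Matrix.trace_sub, Matrix.trace_single_mul, Matrix.trace_single_mul]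
    have := so_skew' Y i j
    simp only [smul_eq_mul]
    rw [this]; ring
  have h := aux_pairs (fun p => ip (omegaB p) Y • (omegaB p).1) (by
      intro i j
      simp only [hip, aux_omega]
      rw [so_skew' Y i j]
      module) (by
      intro i
      simp only [aux_omega]
      simp)
  have h2 : ∑ i, ∑ j, (ip (omegaB (i, j)) Y • (omegaB (i, j)).1) = (2 : ℝ) • Y.1 := by
    simp only [hip, aux_omega]
    ext a b
    simp only [Matrix.sum_apply, Matrix.sub_apply, Matrix.single_apply, Finset.sum_sub_distrib,
      Matrix.smul_apply, ite_and, smul_sub]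
    simp
    have := so_skew' Y a b
    rw [this]; ring
  rw [h2] at h
  have h3 : (2 : ℝ) • (∑ p ∈ pairs n, ip (omegaB p) Y • (omegaB p).1) = (2 : ℝ) • Y.1 := by
    rw [h, two_smul]
  have h4 := smul_right_injective _ (two_ne_zero) h3
  simpa using h4

lemma aux_adinv {n : ℕ} (U V X : so n) : ip (brkt U V) X = ip U (brkt V X) := by
  simp only [ip, brkt, sub_mul, mul_sub, Matrix.trace_sub]
  rw [Matrix.trace_mul_comm (V.1 * U.1), ← Matrix.mul_assoc, Matrix.trace_mul_comm (X.1 * V.1),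
    Matrix.mul_assoc]

/-- The bracket as a linear map in the first variable. -/
def brktL {n : ℕ} (W : so n) : so n →ₗ[ℝ] so n where
  toFun U := brkt U W
  map_add' U V := by
    apply Subtype.ext
    simp [brkt]
    noncomm_ring
  map_smul' c U := by
    apply Subtype.ext
    simp [brkt, smul_sub]

lemma aux_sharp {n : ℕ} (R : Module.End ℝ (so n)) (hR : IsSelfAdjointCO R) (X : so n) :
    sharp R R X = (1 / 2 : ℝ) • ∑ q ∈ pairs n, brkt (R (brkt (R (omegaB q)) X)) (omegaB q) := by
  simp only [sharp, LinearMap.smul_apply, LinearMap.sum_apply, LinearMap.smulRight_apply]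
  congr 1
  rw [Finset.sum_comm]
  refine Finset.sum_congr rfl fun q _ => ?_
  have : ∀ p, (ipL (brkt (R (omegaB p)) (R (omegaB q)))) X • brkt (omegaB p) (omegaB q)
      = brktL (omegaB q) (ip (omegaB p) (R (brkt (R (omegaB q)) X)) • omegaB p) := by
    intro p
    rw [map_smul]
    change ip _ X • _ = _ • _
    rw [aux_adinv, hR]
    rfl
  simp only [this]
  rw [← map_sum, aux_complete]
  rfl

lemma aux_trace0 {n : ℕ} (M : Matrix (Fin n) (Fin n) ℝ) (h : Mᵀ = -M) : M.trace = 0 := by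
  have := Matrix.trace_transpose M
  rw [h, Matrix.trace_neg] at this
  linarith

lemma aux_sharp_form {n : ℕ} (R : Module.End ℝ (so n)) (hR : IsSelfAdjointCO R)
    (A : Matrix (Fin n) (Fin n) ℝ) (hA : Aᵀ = A)
    (hRA : ∀ Y : so n, (R Y).1 = A * Y.1 + Y.1 * A) (X : so n) :
    (sharp R R X).1 = (-2 : ℝ) • (A * A * X.1 + X.1 * (A * A)) + ((n : ℝ) - 4) • (A * X.1 * A)
      + A.trace • (A * X.1 + X.1 * A) + (A * A).trace • X.1 := by
  rw [aux_sharp R hR]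
  have hX := so_skew X
  obtain ⟨X, hXm⟩ := X
  simp only at hX ⊢
  have hz : ∀ q, (brkt (R (brkt (R (omegaB q)) ⟨X, hXm⟩)) (omegaB q)).1
      = (A * A * ((omegaB q).1 * X * (omegaB q).1) + A * ((omegaB q).1 * (A * X) * (omegaB q).1)
        - A * X * A * ((omegaB q).1 * 1 * (omegaB q).1) - A * X * ((omegaB q).1 * A * (omegaB q).1)
        + A * ((omegaB q).1 * (X * A) * (omegaB q).1) + ((omegaB q).1 * (A * X * A) * (omegaB q).1)
        - X * A * ((omegaB q).1 * A * (omegaB q).1) - X * ((omegaB q).1 * (A * A) * (omegaB q).1))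
        - (((omegaB q).1 * (A * A) * (omegaB q).1) * X + ((omegaB q).1 * A * (omegaB q).1) * (A * X)
        - ((omegaB q).1 * (A * X * A) * (omegaB q).1) - ((omegaB q).1 * (A * X) * (omegaB q).1) * A
        + ((omegaB q).1 * A * (omegaB q).1) * (X * A)
        + ((omegaB q).1 * 1 * (omegaB q).1) * (A * X * A)
        - ((omegaB q).1 * (X * A) * (omegaB q).1) * A
        - ((omegaB q).1 * X * (omegaB q).1) * (A * A)) := by
    intro q
    simp only [brkt, hRA]
    noncomm_ring
  have t1 : X.trace = 0 := aux_trace0 X hX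
  have t2 : (A * X * A).trace = 0 := aux_trace0 _ (by
    simp [Matrix.transpose_mul, hA, hX, Matrix.mul_assoc])
  have t3 : (A * X).trace = 0 := by
    have h := Matrix.trace_transpose (A * X)
    rw [Matrix.transpose_mul, hA, hX, Matrix.neg_mul, Matrix.trace_neg, Matrix.trace_mul_comm] at h
    linarith
  have t4 : (X * A).trace = 0 := by rw [Matrix.trace_mul_comm, t3]
  rw [Submodule.coe_smul, Submodule.coe_sum, Finset.sum_congr rfl (fun q _ => hz q)]
  simp only [Finset.sum_add_distrib, Finset.sum_sub_distrib, ← Finset.mul_sum, ← Finset.sum_mul,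
    aux_sandwich, t1, t2, t3, t4, Matrix.transpose_mul, hA, hX, Matrix.transpose_one,
    Matrix.trace_one, Fintype.card_fin]
  simp only [mul_sub, sub_mul, zero_smul, sub_zero, Matrix.mul_neg, Matrix.neg_mul, mul_one, one_mul,
    Matrix.mul_smul, Matrix.smul_mul, Matrix.mul_assoc]
  module

lemma aux_comb (n : ℕ) (hn : 3 ≤ n) (a : Fin (n + 1) → ℝ) (lam S P : ℝ)
    (hS : S = ∑ i, a i) (hP : P = ∑ i, a i ^ 2)
    (hne : ¬ ∃ c, ∀ i, a i = c)
    (hE : ∀ i j, i ≠ j → -(a i + a j) ^ 2 + ((n : ℝ) + 1) * (a i * a j) + (a i + a j) * S + P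
      = lam * (a i + a j)) :
    ∃ i₀ α, a i₀ = -α ∧ (∀ i, i ≠ i₀ → a i = α) ∧ S = ((n : ℝ) - 1) * α := by
  have hn' : (3 : ℝ) ≤ n := by exact_mod_cast hn
  have key : ∀ i j k, i ≠ j → i ≠ k → a j ≠ a k →
      ((n : ℝ) - 1) * a i = a j + a k + lam - S := by
    intro i j k hij hik hjk
    have h1 := hE i j hij
    have h2 := hE i k hik
    have : (a j - a k) * (((n : ℝ) - 1) * a i - (a j + a k + lam - S)) = 0 := by linarith
    rcases mul_eq_zero.mp this with h | h
    · exact absurd (sub_eq_zero.mp h) hjk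
    · linarith
  have hmain : ∀ j k, a j ≠ a k → (∀ i, i ≠ j → a i = a k) →
      ∃ i₀ α, a i₀ = -α ∧ (∀ i, i ≠ i₀ → a i = α) ∧ S = ((n : ℝ) - 1) * α := by
    intro j k hjk h
    have hS' : S = n * a k + a j := by
      rw [hS, ← Finset.add_sum_erase _ _ (Finset.mem_univ j),
        Finset.sum_congr rfl (fun i hi => h i (Finset.ne_of_mem_erase hi))]
      simp; ring
    have hP' : P = n * a k ^ 2 + a j ^ 2 := by
      rw [hP, ← Finset.add_sum_erase _ _ (Finset.mem_univ j),
        Finset.sum_congr rfl (fun i hi => by rw [h i (Finset.ne_of_mem_erase hi)])]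
      simp; ring
    have hjk' : k ≠ j := fun h => hjk (by rw [h])
    obtain ⟨i, hi⟩ : ∃ i, i ∉ ({j, k} : Finset (Fin (n + 1))) := by
      by_contra! hc
      have := Finset.card_le_card (fun x _ => hc x : (Finset.univ : Finset (Fin (n+1))) ⊆ {j, k})
      have h2 := Finset.card_le_two (a := j) (b := k)
      simp at this; omega
    simp only [Finset.mem_insert, Finset.mem_singleton, not_or] at hi
    have e1 := key i j k hi.1 hi.2 hjk
    have e2 := hE i k hi.2
    rw [h i hi.1] at e1 e2
    have e3 : (a k + a j) ^ 2 = 0 := by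
      have hl : lam = 2 * ((n : ℝ) - 1) * a k := by rw [hS'] at e1; linarith
      rw [hl, hS', hP'] at e2
      linarith
    have e4 : a j = - a k := by
      have := pow_eq_zero_iff (two_ne_zero) |>.mp e3
      linarith
    refine ⟨j, a k, e4, h, ?_⟩
    rw [hS', e4]; ring
  obtain ⟨j, k, hjk⟩ : ∃ j k, a j ≠ a k := by
    by_contra! hc
    exact hne ⟨a 0, fun i => hc i 0⟩
  have hjk' : j ≠ k := fun h => hjk (by rw [h])
  obtain ⟨i, hi⟩ : ∃ i, i ∉ ({j, k} : Finset (Fin (n + 1))) := by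
    by_contra! hc
    have := Finset.card_le_card (fun x _ => hc x : (Finset.univ : Finset (Fin (n+1))) ⊆ {j, k})
    have h2 := Finset.card_le_two (a := j) (b := k)
    simp at this; omega
  simp only [Finset.mem_insert, Finset.mem_singleton, not_or] at hi
  have e1 := key i j k hi.1 hi.2 hjk
  have hall : ∀ l, l ≠ j → l ≠ k → a l = a i := by
    intro l h1 h2
    have e2 := key l j k h1 h2 hjk
    have : ((n : ℝ) - 1) * a l = ((n : ℝ) - 1) * a i := by linarith
    exact mul_left_cancel₀ (by linarith) this
  by_cases hk : a i = a k
  · apply hmain j k hjk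
    intro l hl
    by_cases h : l = k
    · rw [h]
    · rw [hall l hl h, hk]
  · have hij : a i = a j := by
      by_contra hj
      have e2 := key k i j (Ne.symm hi.2) (Ne.symm hjk') hj
      have : (n : ℝ) * (a k - a i) = 0 := by linarith
      rcases mul_eq_zero.mp this with h | h
      · linarith
      · exact hk (by linarith)
    apply hmain k j (Ne.symm hjk)
    intro l hl
    by_cases h : l = j
    · rw [h]
    · rw [hall l h hl, hij]

/-- Orthonormal diagonalization of a real symmetric matrix. -/
lemma aux_spec {n : ℕ} (A : Matrix (Fin n) (Fin n) ℝ) (hA : Aᵀ = A) :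
    ∃ (v : Fin n → (Fin n → ℝ)) (a : Fin n → ℝ),
      (∀ i j, v i ⬝ᵥ v j = if i = j then (1 : ℝ) else 0) ∧ (∀ i, A *ᵥ v i = a i • v i) ∧
      A.trace = ∑ i, a i ∧ (A * A).trace = ∑ i, a i ^ 2 ∧
      (∀ c, (∀ i, a i = c) → A = c • 1) := by
  have hH : A.IsHermitian := by
    rw [Matrix.IsHermitian, Matrix.conjTranspose_eq_transpose_of_trivial, hA]
  have hsp := hH.spectral_theorem
  rw [Unitary.conjStarAlgAut_apply] at hsp
  set U : Matrix (Fin n) (Fin n) ℝ := (hH.eigenvectorUnitary : Matrix (Fin n) (Fin n) ℝ) with hU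
  have hU1 : star U * U = 1 := Unitary.coe_star_mul_self _
  have hU2 : U * star U = 1 := Unitary.coe_mul_star_self _
  refine ⟨fun i => ⇑(hH.eigenvectorBasis i), hH.eigenvalues, ?_, ?_, ?_, ?_, ?_⟩
  · intro i j
    have := orthonormal_iff_ite.mp hH.eigenvectorBasis.orthonormal i j
    rw [← this, EuclideanSpace.inner_eq_star_dotProduct]
    simp [dotProduct_comm]
  · exact hH.mulVec_eigenvectorBasis
  · simpa using hH.trace_eq_sum_eigenvalues
  · have : A * A = U * (diagonal hH.eigenvalues * diagonal hH.eigenvalues) * star U := by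
      conv_lhs => rw [hsp]
      have : ∀ D : Matrix (Fin n) (Fin n) ℝ, U * D * star U * (U * D * star U)
          = U * (D * D) * star U := by
        intro D
        calc _ = U * D * (star U * U) * D * star U := by noncomm_ring
          _ = _ := by rw [hU1]; noncomm_ring
      exact this _
    rw [this, Matrix.trace_mul_comm, ← Matrix.mul_assoc, hU1]
    simp [Matrix.diagonal_mul_diagonal, Matrix.trace_diagonal, sq]
  · intro c hc
    have hd : diagonal ((RCLike.ofReal : ℝ → ℝ) ∘ hH.eigenvalues)
        = c • (1 : Matrix (Fin n) (Fin n) ℝ) := by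
      rw [Matrix.smul_one_eq_diagonal]
      congr 1
      funext i
      simp [hc]
    rw [hsp]
    refine (congrArg (fun D => U * D * star U) hd).trans ?_
    simp [hU2]

lemma aux_ric_symm {n : ℕ} (R : Module.End ℝ (so n)) (hR : IsSelfAdjointCO R) :
    (RicM R)ᵀ = RicM R := by
  ext i j
  simp only [RicM, Matrix.transpose_apply, Matrix.of_apply]
  refine Finset.sum_congr rfl fun k _ => ?_
  rw [hR, ip, ip, Matrix.trace_mul_comm]

/-- For `n ≥ 3`, if `R ∈ S²_B(⋀²ℝ^{n+1})` is of Ricci type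
(`R_W = 0`), has unit scalar curvature, is not a multiple of `id ∧ id`, and satisfies
`Q(R) = ‖Ric(R)‖² R`, then there is an orthonormal basis of `ℝ^{n+1}` diagonalizing
`Ric₀(R)` with eigenvalue `1/(n(n+1))` of multiplicity `n` and `-1/(n+1)` of
multiplicity `1`: up to `O(n+1)`, `R` is the curvature operator of `Sⁿ × ℝ` with the
standard product metric normalized to unit scalar curvature. -/
theorem stmt2 (n : ℕ) (hn : 3 ≤ n) (R : Module.End ℝ (so (n + 1)))
    (hACO : IsACO R)
    (hRicciType : compW R = 0)
    (hscal : scal R = 1)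
    (hnotI : ¬ ∃ c : ℝ, R = c • (1 : Module.End ℝ (so (n + 1))))
    (hQ : Qop R = ricNormSq R • R) :
    ∃ (v : Fin (n + 1) → (Fin (n + 1) → ℝ)) (i₀ : Fin (n + 1)),
      (∀ i j : Fin (n + 1), v i ⬝ᵥ v j = if i = j then (1 : ℝ) else 0) ∧
      (∀ i : Fin (n + 1),
        (Ric0M R).mulVec (v i) =
          (if i = i₀ then -(1 / ((n : ℝ) + 1)) else 1 / ((n : ℝ) * ((n : ℝ) + 1))) • v i) := by
  have hn' : (3 : ℝ) ≤ n := by exact_mod_cast hn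
  have hn1 : ((n : ℝ) - 1) ≠ 0 := by linarith
  have hn0 : (n : ℝ) ≠ 0 := by linarith
  have hn2 : ((n : ℝ) + 1) ≠ 0 := by linarith
  obtain ⟨hsa, -⟩ := hACO
  have hT : (Ric0M R)ᵀ = Ric0M R := by
    simp [Ric0M, aux_ric_symm R hsa]
  have hTtr : (Ric0M R).trace = 0 := by
    have h : (RicM R).trace = 1 := hscal
    rw [Ric0M, Matrix.trace_sub, Matrix.trace_smul, Matrix.trace_one, h, hscal]
    simp [hn2]
  set c : ℝ := 1 / (((n : ℝ) + 1) * n) with hc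
  have hReq : R = c • 1 + (2 / ((n : ℝ) - 1)) • wedgeEnd (Ric0M R) 1 := by
    have h : R = compI R + compRic0 R := by
      ext1 X
      have h3 : R X - compI R X - compRic0 R X = 0 := LinearMap.congr_fun hRicciType X
      rw [sub_sub, sub_eq_zero] at h3
      exact h3
    have e1 : ((n : ℝ) + 1 - 1) = n := by ring
    have e2 : ((n : ℝ) + 1 - 2) = n - 1 := by ring
    rw [compI, compRic0, hscal] at h
    push_cast at h
    rw [e1, e2] at h
    exact h
  generalize Ric0M R = T at *
  set A : Matrix (Fin (n + 1)) (Fin (n + 1)) ℝ := (c / 2) • 1 + (1 / ((n : ℝ) - 1)) • T with hAdef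
  have hA : Aᵀ = A := by simp [hAdef, hT]
  have hRA : ∀ Y : so (n + 1), (R Y).1 = A * Y.1 + Y.1 * A := by
    intro Y
    rw [hReq]
    simp only [LinearMap.add_apply, LinearMap.smul_apply, Module.End.one_apply, wedgeEnd,
      LinearMap.coe_mk, AddHom.coe_mk, Submodule.coe_add, Submodule.coe_smul, hT,
      Matrix.transpose_one, hAdef, Matrix.add_mul, Matrix.mul_add, Matrix.smul_mul,
      Matrix.mul_smul, Matrix.one_mul, Matrix.mul_one]
    match_scalars <;> ring
  have hTA : T = ((n : ℝ) - 1) • A - (((n : ℝ) - 1) * (c / 2)) • 1 := by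
    rw [hAdef]
    match_scalars <;> field_simp
    ring
  have hAtr : A.trace = ((n : ℝ) + 1) * (c / 2) := by
    simp only [hAdef, Matrix.trace_add, Matrix.trace_smul, Matrix.trace_one, hTtr, smul_eq_mul,
      Fintype.card_fin]
    push_cast
    ring
  obtain ⟨v, a, hv, hav, htr, htr2, hsc⟩ := aux_spec A hA
  have hQX : ∀ X : so (n + 1), A * (A * X.1 + X.1 * A) + (A * X.1 + X.1 * A) * A
      + ((-2 : ℝ) • (A * A * X.1 + X.1 * (A * A)) + (((n + 1 : ℕ) : ℝ) - 4) • (A * X.1 * A)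
      + A.trace • (A * X.1 + X.1 * A) + (A * A).trace • X.1)
      = ricNormSq R • (A * X.1 + X.1 * A) := by
    intro X
    have h := congrArg Subtype.val (LinearMap.congr_fun hQ X)
    rw [Qop, LinearMap.add_apply, Module.End.mul_apply, LinearMap.smul_apply, Submodule.coe_add,
      Submodule.coe_smul, aux_sharp_form R hsa A hA hRA, hRA, hRA] at h
    exact h
  have hE : ∀ i j, i ≠ j → -(a i + a j) ^ 2 + ((n : ℝ) + 1) * (a i * a j)
      + (a i + a j) * A.trace + (A * A).trace = ricNormSq R * (a i + a j) := by
    intro i j hij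
    have h := hQX (wedgeVec (v i) (v j))
    have hX : (wedgeVec (v i) (v j)).1 = vecMulVec (v i) (v j) - vecMulVec (v j) (v i) := by
      ext x y
      simp [wedgeVec, vecMulVec_apply]
    have hL : ∀ k l, A * vecMulVec (v k) (v l) = a k • vecMulVec (v k) (v l) := by
      intro k l
      rw [Matrix.mul_vecMulVec, hav, Matrix.smul_vecMulVec]
    have hRt : ∀ k l, vecMulVec (v k) (v l) * A = a l • vecMulVec (v k) (v l) := by
      intro k l
      rw [Matrix.vecMulVec_mul, ← Matrix.mulVec_transpose, hA, hav, Matrix.vecMulVec_smul]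
    rw [hX] at h
    simp only [mul_sub, sub_mul, Matrix.mul_add, Matrix.add_mul, ← Matrix.mul_assoc, hL, hRt,
      Matrix.mul_smul, Matrix.smul_mul] at h
    simp only [Matrix.mul_assoc, hL, hRt, Matrix.mul_smul, Matrix.smul_mul] at h
    have h2 := congrArg (fun M => v i ⬝ᵥ (M *ᵥ v j)) h
    simp only [Matrix.add_mulVec, Matrix.sub_mulVec, Matrix.smul_mulVec, Matrix.vecMulVec_mulVec,
      dotProduct_add, dotProduct_sub, dotProduct_smul, hv, hij, hij.symm, if_true, if_false,
      smul_eq_mul, op_smul_eq_smul] at h2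
    push_cast at h2
    linarith
  obtain ⟨i₀, α, h0, h1, hS⟩ := aux_comb n hn a (ricNormSq R) A.trace (A * A).trace htr htr2 (by
      rintro ⟨d, hd⟩
      apply hnotI
      refine ⟨2 * d, ?_⟩
      have hAd := hsc d hd
      ext1 Y
      apply Subtype.ext
      rw [hRA, hAd]
      simp [two_mul, add_smul]) hE
  have hα : α = 1 / (2 * n * ((n : ℝ) - 1)) := by
    rw [hAtr, hc] at hS
    field_simp at hS ⊢
    linarith
  refine ⟨v, i₀, hv, fun i => ?_⟩
  rw [hTA, Matrix.sub_mulVec, Matrix.smul_mulVec, Matrix.smul_mulVec, hav, Matrix.one_mulVec,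
    smul_smul, ← sub_smul]
  congr 1
  by_cases hi : i = i₀
  · rw [if_pos hi, hi, h0, hα, hc]
    field_simp
    ring
  · rw [if_neg hi, h1 i hi, hα, hc]
    field_simp
    ring
end
end
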